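/- arXiv:2309.13180 — 7 statements merged into one kernel-verified Lean document; each statement's English description precedes it below -/
import Mathlib

section
/- Let G be a finite simple graph with no isolated vertices and let Γ_fec ⊆ ℝ^E_{≥0} be the (convex) set of fractional edge covers of G. If γ is an extreme point of Γ_fec, then the subgraph of G whose edge set is the support supp(γ) = {e ∈ E : γ(e) > 0} contains no cycle of even length. -/
open Finset

noncomputable section
open scoped Classical

variable {V : Type*}

/-- The set of admissible densities for a family `Γ` of objects on the edge set of `G`.
Densities are elements of `ℝ^E_{≥0}`, modeled as nonnegative functions on `Sym2 V`
vanishing outside the edge set of `G`. `ρ` is admissible if `ℓ_ρ(γ) ≥ 1` for all `γ ∈ Γ`. -/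
def Adm [Fintype V] [DecidableEq V] (G : SimpleGraph V) (Γ : Set (Sym2 V → ℝ)) :
    Set (Sym2 V → ℝ) :=
  {ρ | (∀ e, 0 ≤ ρ e) ∧ (∀ e ∉ G.edgeSet, ρ e = 0) ∧
    ∀ γ ∈ Γ, 1 ≤ ∑ e ∈ G.edgeFinset, γ e * ρ e}

/-- The `p`-energy of a density `ρ` with edge weights `σ`: `Σ_e σ(e) ρ(e)^p`. -/
def energy [Fintype V] [DecidableEq V] (p : ℝ) (σ : Sym2 V → ℝ) (G : SimpleGraph V)
    (ρ : Sym2 V → ℝ) : ℝ :=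
  ∑ e ∈ G.edgeFinset, σ e * ρ e ^ p

/-- The `p`-modulus of a family `Γ` with edge weights `σ`:
the infimum of the `p`-energy over admissible densities. -/
def Modulus [Fintype V] [DecidableEq V] (p : ℝ) (σ : Sym2 V → ℝ) (G : SimpleGraph V)
    (Γ : Set (Sym2 V → ℝ)) : ℝ :=
  sInf (energy p σ G '' Adm G Γ)

/-- The unweighted 2-energy `Σ_e ρ(e)²`. -/
def energy2 [Fintype V] [DecidableEq V] (G : SimpleGraph V) (ρ : Sym2 V → ℝ) : ℝ :=
  ∑ e ∈ G.edgeFinset, ρ e ^ 2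

/-- The unweighted 2-modulus. -/
def Mod2 [Fintype V] [DecidableEq V] (G : SimpleGraph V) (Γ : Set (Sym2 V → ℝ)) : ℝ :=
  sInf (energy2 G '' Adm G Γ)

/-- `C` is an edge cover of `G`: a set of edges of `G` meeting every vertex. -/
def IsEdgeCover [Fintype V] [DecidableEq V] (G : SimpleGraph V) (C : Finset (Sym2 V)) : Prop :=
  ↑C ⊆ G.edgeSet ∧ ∀ v : V, ∃ e ∈ C, v ∈ e

/-- The family `Γ_ec` of indicator vectors of edge covers of `G`. -/
def Γec [Fintype V] [DecidableEq V] (G : SimpleGraph V) : Set (Sym2 V → ℝ) :=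
  {γ | ∃ C : Finset (Sym2 V), IsEdgeCover G C ∧ γ = fun e => if e ∈ C then 1 else 0}

/-- The family `Γ_fec` of fractional edge covers of `G`: nonnegative vectors on the edge
set with `Σ_{e ∈ δ(v)} γ(e) ≥ 1` at every vertex `v`. -/
def Γfec [Fintype V] [DecidableEq V] (G : SimpleGraph V) : Set (Sym2 V → ℝ) :=
  {γ | (∀ e, 0 ≤ γ e) ∧ (∀ e ∉ G.edgeSet, γ e = 0) ∧
    ∀ v : V, 1 ≤ ∑ e ∈ G.incidenceFinset v, γ e}

/-- The family `Γ_star` of indicator vectors of the stars `δ(v)`, `v ∈ V`. -/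
def Γstar [Fintype V] [DecidableEq V] (G : SimpleGraph V) : Set (Sym2 V → ℝ) :=
  {γ | ∃ v : V, γ = fun e => if e ∈ G.incidenceFinset v then 1 else 0}

/-- The subgraph of `G` whose edge set is the support `{e : γ(e) > 0}` of `γ`. -/
def suppGraph (G : SimpleGraph V) (γ : Sym2 V → ℝ) : SimpleGraph V where
  Adj u v := G.Adj u v ∧ 0 < γ s(u, v)
  symm := by
    constructor
    intro u v h
    refine ⟨h.1.symm, ?_⟩
    rw [Sym2.eq_swap]
    exact h.2
  loopless := ⟨fun v h => G.loopless.irrefl v h.1⟩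

/-- Alternating signed edge-multiplicity vector of a walk. -/
def altVec {H : SimpleGraph V} : {u v : V} → H.Walk u v → Sym2 V → ℝ
  | _, _, .nil => fun _ => 0
  | u, _, .cons (v := x) _ p => fun e => (if e = s(u, x) then 1 else 0) - altVec p e

theorem altVec_eq_zero {H : SimpleGraph V} {u v : V} (p : H.Walk u v) (e : Sym2 V)
    (he : e ∉ p.edges) : altVec p e = 0 := by
  induction p with
  | nil => rfl
  | cons h p ih =>
    rw [SimpleGraph.Walk.edges_cons, List.mem_cons, not_or] at he
    simp [altVec, he.1, ih he.2]

theorem altVec_sum [Fintype V] [DecidableEq V] {G H : SimpleGraph V} (hle : H ≤ G) {u v : V}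
    (p : H.Walk u v) (w : V) :
    ∑ e ∈ G.incidenceFinset w, altVec p e
      = (if w = u then 1 else 0) - (-1) ^ p.length * (if w = v then 1 else 0) := by
  induction p with
  | nil => simp [altVec]
  | @cons u x v h p ih =>
    have hG : G.Adj u x := hle h
    have hne : u ≠ x := hG.ne
    have hm : s(u, x) ∈ G.incidenceFinset w ↔ (w = u ∨ w = x) := by
      simp [SimpleGraph.mem_incidenceFinset, SimpleGraph.incidenceSet, hG]
    have h1 : ∑ e ∈ G.incidenceFinset w, (if e = s(u, x) then (1 : ℝ) else 0)
        = (if w = u then 1 else 0) + (if w = x then 1 else 0) := by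
      rw [Finset.sum_ite_eq']
      by_cases a : w = u
      · have b : w ≠ x := fun b => hne (a.symm.trans b)
        rw [if_pos (hm.2 (Or.inl a)), if_pos a, if_neg b, add_zero]
      · by_cases b : w = x
        · rw [if_pos (hm.2 (Or.inr b)), if_neg a, if_pos b, zero_add]
        · rw [if_neg (fun c => (hm.1 c).elim a b), if_neg a, if_neg b, add_zero]
    simp only [altVec]
    rw [Finset.sum_sub_distrib, ih]
    rw [SimpleGraph.Walk.length_cons, pow_succ]
    have h2 : ∑ e ∈ G.incidenceFinset w,
        (@ite ℝ (e = s(u, x)) (Classical.propDecidable _) 1 0)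
        = (if w = u then 1 else 0) + (if w = x then 1 else 0) := by
      convert h1
    have h3 : ∀ A B C D E : ℝ, A = B + C → A - (C - D * E) = B - D * -1 * E := by
      intro A B C D E hA
      rw [hA]
      ring
    apply h3
    convert h2

/-- If `γ` is an extreme point of the set of fractional edge covers, then the subgraph
of `G` whose edge set is the support of `γ` contains no cycle of even length. -/
theorem extremePoint_no_even_cycle [Fintype V] [DecidableEq V] (G : SimpleGraph V)
    (hiso : ∀ v : V, ∃ u, G.Adj v u) (γ : Sym2 V → ℝ)
    (hγ : γ ∈ (Γfec G).extremePoints ℝ) :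
    ¬ ∃ (v : V) (c : (suppGraph G γ).Walk v v), c.IsCycle ∧ Even c.length := by
  rintro ⟨v, c, hc, hev⟩
  have hle : suppGraph G γ ≤ G := fun a b h => h.1
  obtain ⟨⟨h0, hE, hcov⟩, hext⟩ := hγ
  have hsum : ∀ w, ∑ e ∈ G.incidenceFinset w, altVec c e = 0 := by
    intro w
    rw [altVec_sum hle c w, hev.neg_one_pow]
    ring
  have hsupp : ∀ e, altVec c e ≠ 0 → e ∈ G.edgeSet ∧ 0 < γ e := by
    intro e he
    have hmem : e ∈ c.edges := by
      by_contra hn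
      exact he (altVec_eq_zero c e hn)
    have := c.edges_subset_edgeSet hmem
    induction e with
    | _ a b => exact this
  have hne : ∃ e, altVec c e ≠ 0 := by
    cases c with
    | nil => exact absurd hc SimpleGraph.Walk.IsCycle.not_of_nil
    | @cons _ x _ h p =>
      refine ⟨s(v, x), ?_⟩
      have ht := ((SimpleGraph.Walk.cons_isCycle_iff p h).1 hc).2
      simp [altVec, altVec_eq_zero p _ ht]
  have hε : ∃ ε : ℝ, 0 < ε ∧ ∀ e, ε * |altVec c e| ≤ γ e := by
    have hev' : ∀ᶠ ε in nhdsWithin (0 : ℝ) (Set.Ioi 0), ∀ e, ε * |altVec c e| ≤ γ e := by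
      rw [Filter.eventually_all]
      intro e
      by_cases he : altVec c e = 0
      · simp [he, h0 e]
      · have hpos := (hsupp e he).2
        have ht : Filter.Tendsto (fun ε : ℝ => ε * |altVec c e|) (nhdsWithin 0 (Set.Ioi 0))
            (nhds (0 * |altVec c e|)) :=
          ((continuous_id.mul continuous_const).tendsto 0).mono_left nhdsWithin_le_nhds
        rw [zero_mul] at ht
        exact (ht.eventually_lt_const hpos).mono fun _ h => h.le
    obtain ⟨ε, h1, h2⟩ := (hev'.and self_mem_nhdsWithin).exists
    exact ⟨ε, h2, h1⟩
  obtain ⟨ε, hε, hb⟩ := hε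
  have key : ∀ t : ℝ, |t| = ε → (fun e => γ e + t * altVec c e) ∈ Γfec G := by
    intro t ht
    refine ⟨fun e => ?_, fun e he => ?_, fun w => ?_⟩
    · have h1 := hb e
      rw [← ht, ← abs_mul] at h1
      have h2 := neg_abs_le (t * altVec c e)
      show 0 ≤ γ e + t * altVec c e
      linarith
    · have : altVec c e = 0 := by
        by_contra hn
        exact he (hsupp e hn).1
      simp [this, hE e he]
    · rw [Finset.sum_add_distrib, ← Finset.mul_sum, hsum w, mul_zero, add_zero]
      exact hcov w
  have k1 := key ε (abs_of_pos hε)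
  have k2 := key (-ε) (by rw [abs_neg, abs_of_pos hε])
  have hseg : γ ∈ openSegment ℝ (fun e => γ e + ε * altVec c e)
      (fun e => γ e + (-ε) * altVec c e) := by
    refine ⟨1/2, 1/2, by norm_num, by norm_num, by norm_num, ?_⟩
    funext e
    simp only [Pi.add_apply, Pi.smul_apply, smul_eq_mul]
    ring
  have heq := hext k1 k2 hseg
  obtain ⟨e, he⟩ := hne
  have h3 := congrFun heq e
  have h4 : ε * altVec c e = 0 := by
    simpa using h3
  exact (mul_ne_zero hε.ne' he) h4
end
end

section
/- Let G be a finite simple graph with no isolated vertices and let Γ_fec be the set of fractional edge covers of G. If γ is an extreme point of Γ_fec, then every connected component of the subgraph H with edge set supp(γ) that contains a pendant edge of H (an edge incident to a vertex of H-degree 1) is a substar, i.e., all edges of that component are incident to one common vertex. -/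
open Finset

noncomputable section
open scoped Classical

variable {V : Type*}

section helpers

variable [Fintype V] [DecidableEq V]

lemma fec_sum_eq (G : SimpleGraph V) (γ D : Sym2 V → ℝ) (h0 : ∀ e, 0 ≤ γ e)
    (hD : ∀ e, γ e = 0 → D e = 0) (x : V) :
    ∑ e ∈ G.incidenceFinset x, D e = ∑ y ∈ (suppGraph G γ).neighborFinset x, D s(x, y) := by
  have h1 : ∑ y ∈ (suppGraph G γ).neighborFinset x, D s(x, y)
      = ∑ e ∈ ((suppGraph G γ).neighborFinset x).image (fun y => s(x, y)), D e := by
    rw [Finset.sum_image]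
    intro a _ b _ hab
    exact Sym2.congr_right.1 hab
  rw [h1]
  symm
  apply Finset.sum_subset
  · intro e he
    simp only [Finset.mem_image, SimpleGraph.mem_neighborFinset] at he
    obtain ⟨y, hy, rfl⟩ := he
    simp [SimpleGraph.mem_incidenceFinset, hy.1]
  · intro e he hne
    apply hD
    by_contra hc
    apply hne
    rw [SimpleGraph.mem_incidenceFinset] at he
    obtain ⟨he1, he2⟩ := he
    obtain ⟨y, rfl⟩ := Sym2.mem_iff_exists.mp he2
    simp only [Finset.mem_image, SimpleGraph.mem_neighborFinset]
    exact ⟨y, ⟨he1, lt_of_le_of_ne (h0 _) (Ne.symm hc)⟩, rfl⟩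

lemma fec_rigid (G : SimpleGraph V) (γ D : Sym2 V → ℝ)
    (hγ : γ ∈ (Γfec G).extremePoints ℝ)
    (hD : ∀ e, γ e = 0 → D e = 0)
    (hT : ∀ x, ∑ e ∈ G.incidenceFinset x, γ e = 1 → ∑ e ∈ G.incidenceFinset x, D e = 0) :
    D = 0 := by
  obtain ⟨⟨h0, hE, hc⟩, hext⟩ := hγ
  have key : ∀ a b : ℝ, 0 ≤ a → (a = 0 → b = 0) →
      ∀ᶠ ε : ℝ in nhds 0, 0 ≤ a + ε * b := by
    intro a b ha hab
    rcases ha.eq_or_lt with h | h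
    · rw [hab h.symm, ← h]; simp
    · have : Filter.Tendsto (fun ε : ℝ => a + ε * b) (nhds 0) (nhds (a + 0 * b)) :=
        Continuous.tendsto (by fun_prop) 0
      have h2 := this.eventually (lt_mem_nhds (a := 0) (by simpa using h))
      exact h2.mono fun _ h => h.le
  have hev : ∀ᶠ ε : ℝ in nhds 0, (γ + ε • D) ∈ Γfec G := by
    have e1 : ∀ᶠ ε : ℝ in nhds 0, ∀ e, 0 ≤ γ e + ε * D e :=
      Filter.eventually_all.2 fun e => key _ _ (h0 e) (hD e)
    have e2 : ∀ᶠ ε : ℝ in nhds 0, ∀ x, 0 ≤ (∑ e ∈ G.incidenceFinset x, γ e - 1) +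
        ε * ∑ e ∈ G.incidenceFinset x, D e :=
      Filter.eventually_all.2 fun x => key _ _ (by linarith [hc x])
        (fun h => hT x (by linarith))
    filter_upwards [e1, e2] with ε h1 h2
    refine ⟨fun e => by simpa using h1 e, fun e he => ?_, fun x => ?_⟩
    · simp [hE e he, hD e (hE e he)]
    · have := h2 x
      simp only [Pi.add_apply, Pi.smul_apply, smul_eq_mul, Finset.sum_add_distrib,
        ← Finset.mul_sum]
      linarith
  have hev' : ∀ᶠ ε : ℝ in nhds 0, (γ + (-ε) • D) ∈ Γfec G := by
    have : Filter.Tendsto (fun ε : ℝ => -ε) (nhds 0) (nhds 0) := by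
      simpa using (continuous_neg (G := ℝ)).tendsto 0
    exact this.eventually hev
  obtain ⟨ε, ⟨hp, hm⟩, hpos⟩ := (((hev.and hev').filter_mono nhdsWithin_le_nhds).and
    (self_mem_nhdsWithin (a := (0 : ℝ)) (s := Set.Ioi 0))).exists
  have hpos : 0 < ε := hpos
  have := hext hp hm ⟨1/2, 1/2, by norm_num, by norm_num, by norm_num, by
    ext e; simp; ring⟩
  have h3 : ε • D = 0 := by simpa using this
  exact (smul_eq_zero.1 h3).resolve_left (ne_of_gt hpos)

/-- The subgraph of the support graph on the edges not incident to a leaf. -/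
def coreGraph (H : SimpleGraph V) : SimpleGraph V where
  Adj x y := H.Adj x y ∧ H.degree x ≠ 1 ∧ H.degree y ≠ 1
  symm := ⟨fun _ _ h => ⟨h.1.symm, h.2.2, h.2.1⟩⟩
  loopless := ⟨fun v h => H.loopless.irrefl v h.1⟩

/-- Extension by zero from a finite set, as a linear map. -/
def extZero (F : Finset (Sym2 V)) : (F → ℝ) →ₗ[ℝ] (Sym2 V → ℝ) where
  toFun d e := if h : e ∈ F then d ⟨e, h⟩ else 0
  map_add' a b := by ext e; by_cases h : e ∈ F <;> simp [h]
  map_smul' a b := by ext e; by_cases h : e ∈ F <;> simp [h]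

/-- The vertex sums at the vertices of `T`, as a linear map. -/
def vertexSums (G : SimpleGraph V) (T : Finset V) : (Sym2 V → ℝ) →ₗ[ℝ] (T → ℝ) where
  toFun D t := ∑ e ∈ G.incidenceFinset t.1, D e
  map_add' a b := by ext e; simp [Finset.sum_add_distrib]
  map_smul' a b := by ext e; simp [Finset.mul_sum]

lemma leaf_ge (G : SimpleGraph V) (γ : Sym2 V → ℝ) (hγ : γ ∈ Γfec G) {x y : V}
    (hx : (suppGraph G γ).degree x = 1) (hxy : (suppGraph G γ).Adj x y) : 1 ≤ γ s(x, y) := by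
  have h := hγ.2.2 x
  rw [fec_sum_eq G γ γ hγ.1 (fun _ h => h) x] at h
  rw [← SimpleGraph.card_neighborFinset_eq_degree, Finset.card_eq_one] at hx
  obtain ⟨z, hz⟩ := hx
  have : y ∈ (suppGraph G γ).neighborFinset x := by simpa using hxy
  rw [hz, Finset.mem_singleton] at this
  rw [hz, Finset.sum_singleton, ← this] at h
  exact h

lemma not_tight (G : SimpleGraph V) (γ : Sym2 V → ℝ) (hγ : γ ∈ Γfec G) {x y : V}
    (hx : (suppGraph G γ).degree x = 1) (hxy : (suppGraph G γ).Adj x y)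
    (hy : (suppGraph G γ).degree y ≠ 1) : ∑ e ∈ G.incidenceFinset y, γ e ≠ 1 := by
  have h1 := leaf_ge G γ hγ hx hxy
  rw [fec_sum_eq G γ γ hγ.1 (fun _ h => h) y]
  have hmem : x ∈ (suppGraph G γ).neighborFinset y := by simpa using hxy.symm
  rw [← Finset.add_sum_erase _ _ hmem]
  have hne : (((suppGraph G γ).neighborFinset y).erase x).Nonempty := by
    rw [← Finset.card_pos, Finset.card_erase_of_mem hmem,
      SimpleGraph.card_neighborFinset_eq_degree]
    have : 0 < (suppGraph G γ).degree y := by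
      rw [← SimpleGraph.card_neighborFinset_eq_degree]; exact Finset.card_pos.2 ⟨x, hmem⟩
    omega
  have hpos : 0 < ∑ z ∈ ((suppGraph G γ).neighborFinset y).erase x, γ s(y, z) := by
    apply Finset.sum_pos _ hne
    intro z hz
    have := Finset.mem_of_mem_erase hz
    rw [SimpleGraph.mem_neighborFinset] at this
    exact this.2
  rw [Sym2.eq_swap] at h1
  linarith

lemma nbr_leaf (G : SimpleGraph V) (γ : Sym2 V → ℝ)
    (hγ : γ ∈ (Γfec G).extremePoints ℝ) {u v w : V}
    (huv : (suppGraph G γ).Adj u v) (hu : (suppGraph G γ).degree u = 1)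
    (hvw : (suppGraph G γ).Adj v w) : (suppGraph G γ).degree w = 1 := by
  by_contra hw
  have hf := hγ.1
  by_cases hv : (suppGraph G γ).degree v = 1
  · rw [← SimpleGraph.card_neighborFinset_eq_degree, Finset.card_eq_one] at hv
    obtain ⟨z, hz⟩ := hv
    have h1 : u ∈ (suppGraph G γ).neighborFinset v := by simpa using huv.symm
    have h2 : w ∈ (suppGraph G γ).neighborFinset v := by simpa using hvw
    rw [hz, Finset.mem_singleton] at h1 h2
    rw [h2, ← h1] at hw
    exact hw hu
  have hvt := not_tight G γ hf hu huv hv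
  set H := suppGraph G γ with hH
  set K := coreGraph H with hK
  let T : Finset V := Finset.univ.filter fun x =>
    ∑ e ∈ G.incidenceFinset x, γ e = 1 ∧ H.degree x ≠ 1
  have hvT : v ∉ T := by simp [T, hvt]
  have hKv : 0 < K.degree v := by
    rw [SimpleGraph.degree_pos_iff_exists_adj]
    exact ⟨w, hvw, hv, hw⟩
  have hTdeg : ∀ x ∈ T, 2 ≤ K.degree x := by
    intro x hx
    simp only [T, Finset.mem_filter, Finset.mem_univ, true_and] at hx
    have heq : K.neighborFinset x = H.neighborFinset x := by
      ext y
      simp only [SimpleGraph.mem_neighborFinset]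
      refine ⟨fun h => h.1, fun h => ⟨h, hx.2, fun hy => ?_⟩⟩
      exact not_tight G γ hf hy h.symm hx.2 hx.1
    rw [← SimpleGraph.card_neighborFinset_eq_degree, heq,
      SimpleGraph.card_neighborFinset_eq_degree]
    have : H.degree x ≠ 0 := by
      intro h
      rw [← SimpleGraph.card_neighborFinset_eq_degree, Finset.card_eq_zero] at h
      have h1 := hx.1
      rw [fec_sum_eq G γ γ hf.1 (fun _ h => h) x, ← hH, h] at h1
      simp at h1
    have := hx.2
    omega
  have hcard : T.card < K.edgeFinset.card := by
    have h1 := K.sum_degrees_eq_twice_card_edges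
    have h2 : ∑ x ∈ insert v T, K.degree x ≤ ∑ x, K.degree x :=
      Finset.sum_le_sum_of_subset (Finset.subset_univ _)
    rw [Finset.sum_insert hvT] at h2
    have h3 := Finset.card_nsmul_le_sum T (fun x => K.degree x) 2 hTdeg
    simp only [smul_eq_mul] at h3
    omega
  have hker := LinearMap.ker_ne_bot_of_finrank_lt
    (f := (vertexSums G T).comp (extZero K.edgeFinset)) (by
      rw [Module.finrank_fintype_fun_eq_card, Module.finrank_fintype_fun_eq_card,
        Fintype.card_coe, Fintype.card_coe]
      exact hcard)
  obtain ⟨d, hd, hd0⟩ := Submodule.exists_mem_ne_zero_of_ne_bot hker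
  have hKpos : ∀ e ∈ K.edgeFinset, γ e ≠ 0 := by
    intro e he
    induction e with
    | h a b =>
      rw [SimpleGraph.mem_edgeFinset, SimpleGraph.mem_edgeSet] at he
      exact he.1.2.ne'
  have hsup : ∀ e, γ e = 0 → extZero K.edgeFinset d e = 0 := by
    intro e he
    have : e ∉ K.edgeFinset := fun h => hKpos e h he
    exact dif_neg this
  have hD := fec_rigid G γ (extZero K.edgeFinset d) hγ hsup (by
    intro x hx
    by_cases hl : H.degree x = 1
    · apply Finset.sum_eq_zero
      intro e he
      rw [SimpleGraph.mem_incidenceFinset] at he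
      obtain ⟨y, rfl⟩ := Sym2.mem_iff_exists.mp he.2
      refine dif_neg ?_
      rw [SimpleGraph.mem_edgeFinset, SimpleGraph.mem_edgeSet]
      exact fun h => h.2.1 hl
    · have hxT : x ∈ T := by simp [T, hx, hl]
      exact congrFun (LinearMap.mem_ker.1 hd) ⟨x, hxT⟩)
  apply hd0
  ext ⟨e, he⟩
  have h1 : extZero K.edgeFinset d e = d ⟨e, he⟩ := dif_pos he
  rw [← h1, hD]
  rfl

end helpers

/-- If `γ` is an extreme point of the set of fractional edge covers, then every connected
component of the support graph `H` containing a pendant edge (an edge `uv` with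
`deg_H(u) = 1`) is a substar: all edges of that component meet a common vertex. -/
theorem extremePoint_pendant_component_substar [Fintype V] [DecidableEq V]
    (G : SimpleGraph V) (hiso : ∀ v : V, ∃ u, G.Adj v u) (γ : Sym2 V → ℝ)
    (hγ : γ ∈ (Γfec G).extremePoints ℝ) :
    ∀ u v : V, (suppGraph G γ).Adj u v → (suppGraph G γ).degree u = 1 →
      ∃ c : V, ∀ x y : V, (suppGraph G γ).Adj x y →
        (suppGraph G γ).Reachable u x → x = c ∨ y = c := by
  intro u v huv hu
  have hnl : ∀ w, (suppGraph G γ).Adj v w → (suppGraph G γ).degree w = 1 :=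
    fun w hw => nbr_leaf G γ hγ huv hu hw
  have hback : ∀ w z, (suppGraph G γ).Adj v w → (suppGraph G γ).Adj w z → z = v := by
    intro w z hw hz
    have h := hnl w hw
    rw [← SimpleGraph.card_neighborFinset_eq_degree, Finset.card_eq_one] at h
    obtain ⟨t, ht⟩ := h
    have h1 : v ∈ (suppGraph G γ).neighborFinset w := by simpa using hw.symm
    have h2 : z ∈ (suppGraph G γ).neighborFinset w := by simpa using hz
    rw [ht, Finset.mem_singleton] at h1 h2
    rw [h1, h2]
  have hreach : ∀ x, (suppGraph G γ).Reachable u x → x = v ∨ (suppGraph G γ).Adj v x := by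
    intro x hx
    rw [SimpleGraph.reachable_iff_reflTransGen] at hx
    induction hx with
    | refl => exact Or.inr huv.symm
    | tail _ hbc ih =>
      rcases ih with rfl | h
      · exact Or.inr hbc
      · exact Or.inl (hback _ _ h hbc)
  refine ⟨v, fun x y hxy hx => ?_⟩
  rcases hreach x hx with h | h
  · exact Or.inl h
  · exact Or.inr (hback _ _ h hxy)
end
end

section
/- Let G be a finite simple graph with no isolated vertices and let Γ_fec be the set of fractional edge covers of G. Then every extreme point of Γ_fec is a basic fractional edge cover: it takes values only in {0, 1/2, 1}, its support is a vertex-disjoint union of odd cycles and substars of G, and it takes the value 1/2 exactly on the edges belonging to the odd cycles of its support (and the value 1 on the substar edges). -/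
open Finset

noncomputable section
open scoped Classical

variable {V : Type*}

/-- The connected component of `u` in `H` is a substar: all its edges share a common vertex. -/
def IsSubstarComponent (H : SimpleGraph V) (u : V) : Prop :=
  ∃ c : V, ∀ x y : V, H.Adj x y → H.Reachable u x → x = c ∨ y = c

/-- The connected component of `u` in `H` is a cycle of odd length. -/
def IsOddCycleComponent (H : SimpleGraph V) (u : V) : Prop :=
  ∃ (w : V) (c : H.Walk w w), c.IsCycle ∧ Odd c.length ∧ H.Reachable u w ∧
    ∀ x y : V, H.Adj x y → H.Reachable u x → s(x, y) ∈ c.edges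

/-- `γ` is a basic fractional edge cover of `G`: a fractional edge cover taking values
only in `{0, 1/2, 1}`, whose support is a vertex-disjoint union of odd cycles and
substars, with `γ(e) = 1/2` exactly on the edges lying on odd cycles of the support. -/
def IsBasicFEC [Fintype V] [DecidableEq V] (G : SimpleGraph V) (γ : Sym2 V → ℝ) : Prop :=
  γ ∈ Γfec G ∧
  (∀ e, γ e = 0 ∨ γ e = 1 / 2 ∨ γ e = 1) ∧
  (∀ u v : V, (suppGraph G γ).Adj u v →
    IsSubstarComponent (suppGraph G γ) u ∨ IsOddCycleComponent (suppGraph G γ) u) ∧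
  (∀ e ∈ G.edgeSet, (γ e = 1 / 2 ↔ ∃ (w : V) (c : (suppGraph G γ).Walk w w),
    c.IsCycle ∧ Odd c.length ∧ e ∈ c.edges))

/-- The family of basic fractional edge covers of `G`. -/
def Γbfec [Fintype V] [DecidableEq V] (G : SimpleGraph V) : Set (Sym2 V → ℝ) :=
  {γ | IsBasicFEC G γ}

lemma exists_eps_aux {ι : Type*} [Finite ι] (a b : ι → ℝ) (hb : ∀ i, 0 ≤ b i)
    (hab : ∀ i, b i = 0 → a i = 0) : ∃ ε : ℝ, 0 < ε ∧ ∀ i, ε * |a i| ≤ b i := by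
  have h : ∀ᶠ ε : ℝ in nhdsWithin 0 (Set.Ioi 0), ∀ i, ε * |a i| ≤ b i := by
    rw [Filter.eventually_all]
    intro i
    rcases (hb i).eq_or_lt with h0 | h0
    · filter_upwards with ε
      rw [hab i h0.symm, ← h0]; simp
    · have ht : Filter.Tendsto (fun ε : ℝ => ε * |a i|) (nhdsWithin 0 (Set.Ioi 0)) (nhds 0) := by
        have : Filter.Tendsto (fun ε : ℝ => ε * |a i|) (nhds 0) (nhds (0 * |a i|)) :=
          (continuous_id.mul continuous_const).tendsto 0
        rw [zero_mul] at this
        exact this.mono_left nhdsWithin_le_nhds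
      filter_upwards [ht.eventually (gt_mem_nhds h0)] with ε hε using hε.le
  obtain ⟨ε, h1, h2⟩ := (h.and self_mem_nhdsWithin).exists
  exact ⟨ε, h2, h1⟩

lemma sum_incidence_aux [Fintype V] [DecidableEq V] (G : SimpleGraph V) (f : Sym2 V → ℝ)
    (hf : ∀ e ∉ G.edgeSet, f e = 0) (v : V) :
    ∑ e ∈ G.incidenceFinset v, f e = ∑ u, f s(v, u) := by
  have h1 : ∑ u, f s(v, u) = ∑ u ∈ Finset.univ.filter (fun u => G.Adj v u), f s(v, u) := by
    symm
    apply Finset.sum_subset (Finset.filter_subset _ _)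
    intro u _ hu
    apply hf
    simpa using hu
  rw [h1]
  symm
  apply Finset.sum_bij (fun u _ => s(v, u))
  · intro u hu
    simpa [SimpleGraph.mem_incidenceFinset, SimpleGraph.mk'_mem_incidenceSet_iff] using hu
  · intro a _ b _ h
    exact Sym2.congr_right.mp h
  · intro e he
    rw [SimpleGraph.mem_incidenceFinset] at he
    obtain ⟨he, hv⟩ := he
    obtain ⟨u, rfl⟩ := Sym2.mem_iff_exists.mp hv
    exact ⟨u, by simpa using he, rfl⟩
  · intros; rfl

lemma pert_aux [Fintype V] [DecidableEq V] (G : SimpleGraph V) (γ : Sym2 V → ℝ)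
    (hγ : γ ∈ (Γfec G).extremePoints ℝ) (f : Sym2 V → ℝ) (hf : ∀ e, γ e = 0 → f e = 0)
    (hs : ∀ v, ∑ u, γ s(v, u) = 1 → ∑ u, f s(v, u) = 0) : f = 0 := by
  rw [mem_extremePoints_iff_left] at hγ
  obtain ⟨⟨h0, hE, hc⟩, hex⟩ := hγ
  have hfE : ∀ e ∉ G.edgeSet, f e = 0 := fun e he => hf e (hE e he)
  obtain ⟨ε₁, hε₁, hb₁⟩ := exists_eps_aux f γ h0 hf
  obtain ⟨ε₂, hε₂, hb₂⟩ := exists_eps_aux (fun v => ∑ u, f s(v, u))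
    (fun v => (∑ u, γ s(v, u)) - 1)
    (fun v => by have := hc v; rw [sum_incidence_aux G γ hE] at this; linarith)
    (fun v hv => hs v (by linarith))
  set ε := min ε₁ ε₂ with hε
  have hεpos : 0 < ε := lt_min hε₁ hε₂
  have hmem : ∀ t : ℝ, |t| = ε → (γ + t • f) ∈ Γfec G := by
    intro t ht
    refine ⟨fun e => ?_, fun e he => ?_, fun v => ?_⟩
    · have h1 : |t * f e| ≤ γ e := by
        rw [abs_mul, ht]
        exact (mul_le_mul_of_nonneg_right (min_le_left _ _) (abs_nonneg _)).trans (hb₁ e)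
      have := (abs_le.mp h1).1
      simp only [Pi.add_apply, Pi.smul_apply, smul_eq_mul]; linarith
    · simp [hE e he, hfE e he]
    · rw [sum_incidence_aux G _ (fun e he => by simp [hE e he, hfE e he])]
      have h1 : |t * ∑ u, f s(v, u)| ≤ (∑ u, γ s(v, u)) - 1 := by
        rw [abs_mul, ht]
        exact (mul_le_mul_of_nonneg_right (min_le_right _ _) (abs_nonneg _)).trans (hb₂ v)
      have := (abs_le.mp h1).1
      simp only [Pi.add_apply, Pi.smul_apply, smul_eq_mul, Finset.sum_add_distrib,
        ← Finset.mul_sum]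
      linarith
  have hkey := hex _ (hmem ε (abs_of_pos hεpos)) _ (hmem (-ε) (by rw [abs_neg, abs_of_pos hεpos]))
    ⟨1/2, 1/2, by norm_num, by norm_num, by norm_num, by
      ext e; simp only [Pi.add_apply, Pi.smul_apply, smul_eq_mul]; ring⟩
  ext e
  have := congrFun hkey e
  simp only [Pi.add_apply, Pi.smul_apply, smul_eq_mul, add_eq_left, mul_eq_zero] at this
  rcases this with h | h
  · exact absurd h hεpos.ne'
  · simpa using h

/-- Alternating signed edge indicator along a walk. -/
def altWalk {H : SimpleGraph V} : {a b : V} → H.Walk a b → Sym2 V → ℝ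
  | _, _, .nil => fun _ => 0
  | _, _, .cons (u := u) (v := v) _ p => fun e => (if e = s(u, v) then 1 else 0) - altWalk p e

lemma altWalk_eq_zero {H : SimpleGraph V} {a b : V} (p : H.Walk a b) (e : Sym2 V)
    (he : e ∉ p.edges) : altWalk p e = 0 := by
  induction p with
  | nil => rfl
  | cons h p ih =>
    simp only [SimpleGraph.Walk.edges_cons, List.mem_cons, not_or] at he
    simp [altWalk, he.1, ih he.2]

lemma sum_single_aux [Fintype V] (a c x : V) (h : a ≠ c) :
    ∑ u, (if s(x, u) = s(a, c) then (1 : ℝ) else 0) =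
      (if x = a then 1 else 0) + (if x = c then 1 else 0) := by
  have : ∀ u, (if s(x, u) = s(a, c) then (1 : ℝ) else 0) =
      (if u = c then (if x = a then 1 else 0) else 0) +
      (if u = a then (if x = c then 1 else 0) else 0) := by
    intro u
    simp only [Sym2.eq_iff]
    split_ifs <;> simp_all
  simp only [this, Finset.sum_add_distrib, Finset.sum_ite_eq', Finset.mem_univ, if_true]

lemma sum_altWalk [Fintype V] {H : SimpleGraph V} {a b : V} (p : H.Walk a b) (x : V) :
    ∑ u, altWalk p s(x, u) =
      (if x = a then 1 else 0) - (-1) ^ p.length * (if x = b then 1 else 0) := by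
  induction p with
  | nil => simp [altWalk]
  | cons h p ih =>
    simp only [altWalk, Finset.sum_sub_distrib, ih, SimpleGraph.Walk.length_cons]
    rw [sum_single_aux _ _ _ h.ne]
    ring

/-- Graph of the edges with value strictly between `0` and `1`. -/
def fracGraph (H : SimpleGraph V) (γ : Sym2 V → ℝ) : SimpleGraph V where
  Adj u v := H.Adj u v ∧ γ s(u, v) < 1
  symm := by
    constructor
    intro u v h
    refine ⟨h.1.symm, ?_⟩
    rw [Sym2.eq_swap]
    exact h.2
  loopless := ⟨fun v h => H.loopless.irrefl v h.1⟩

lemma card_aux [Fintype V] (K : SimpleGraph V) (T : V → Prop)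
    (hK : ∀ f : Sym2 V → ℝ, (∀ e ∉ K.edgeSet, f e = 0) →
      (∀ v, T v → ∑ u, f s(v, u) = 0) → f = 0) :
    K.edgeFinset.card ≤ (Finset.univ.filter T).card := by
  let ext : (K.edgeSet → ℝ) → Sym2 V → ℝ := fun g e => if h : e ∈ K.edgeSet then g ⟨e, h⟩ else 0
  let L : (K.edgeSet → ℝ) →ₗ[ℝ] ({v // T v} → ℝ) :=
    { toFun := fun g v => ∑ u, ext g s(v.1, u)
      map_add' := by
        intro g g'
        ext v
        simp only [Pi.add_apply, ← Finset.sum_add_distrib]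
        refine Finset.sum_congr rfl fun u _ => ?_
        simp only [ext]; split_ifs <;> simp
      map_smul' := by
        intro c g
        ext v
        simp only [Pi.smul_apply, smul_eq_mul, RingHom.id_apply, Finset.mul_sum]
        refine Finset.sum_congr rfl fun u _ => ?_
        simp only [ext]; split_ifs <;> simp }
  have hL : Function.Injective L := by
    rw [injective_iff_map_eq_zero]
    intro g hg
    have h0 : ext g = 0 := hK _ (fun e he => by simp only [ext]; rw [dif_neg he])
      (fun v hv => congrFun hg ⟨v, hv⟩)
    funext e
    have := congrFun h0 e.1
    simp only [ext] at this
    rw [dif_pos e.2] at this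
    exact this
  have := LinearMap.finrank_le_finrank_of_injective hL
  rw [Module.finrank_fintype_fun_eq_card, Module.finrank_fintype_fun_eq_card] at this
  rw [SimpleGraph.edgeFinset_card, ← Fintype.card_subtype]
  convert this

lemma degree_aux [Fintype V] (K : SimpleGraph V) (T : V → Prop)
    (hc : K.edgeFinset.card ≤ (Finset.univ.filter T).card)
    (hT : ∀ v, T v → 2 ≤ K.degree v) (v : V) : K.degree v = if T v then 2 else 0 := by
  have hle : ∀ v ∈ Finset.univ, (if T v then 2 else 0) ≤ K.degree v := by
    intro v _
    split_ifs with h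
    · exact hT v h
    · exact Nat.zero_le _
  have h1 := K.sum_degrees_eq_twice_card_edges
  have h2 : ∑ v, (if T v then 2 else 0) = 2 * (Finset.univ.filter T).card := by
    rw [← Finset.sum_filter, Finset.sum_const, smul_eq_mul, mul_comm]
  have h3 := Finset.sum_le_sum hle
  have h4 : ∑ v, (if T v then 2 else 0) = ∑ v, K.degree v := by
    apply le_antisymm h3
    rw [h2]
    have : ∑ v, K.degree v = 2 * K.edgeFinset.card := by convert h1
    omega
  exact ((Finset.sum_eq_sum_iff_of_le hle).mp h4 v (Finset.mem_univ v)).symm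

/-- Every extreme point of the set of fractional edge covers is a basic fractional
edge cover. -/
theorem extremePoint_isBasicFEC [Fintype V] [DecidableEq V] (G : SimpleGraph V)
    (hiso : ∀ v : V, ∃ u, G.Adj v u) (γ : Sym2 V → ℝ)
    (hγ : γ ∈ (Γfec G).extremePoints ℝ) :
    IsBasicFEC G γ := by
  have hpert := pert_aux G γ hγ
  have hmem : γ ∈ Γfec G := hγ.1
  obtain ⟨h0, hE, hcov⟩ := hmem
  have hcov' : ∀ v, 1 ≤ ∑ u, γ s(v, u) := fun v => by
    rw [← sum_incidence_aux G γ hE]; exact hcov v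
  set H := suppGraph G γ with hH
  have hadj : ∀ u v, H.Adj u v ↔ 0 < γ s(u, v) := by
    intro u v
    refine ⟨fun h => h.2, fun h => ⟨?_, h⟩⟩
    by_contra hn
    rw [hE s(u, v) (by simpa using hn)] at h
    exact lt_irrefl _ h
  have hnadj : ∀ u v, ¬ H.Adj u v → γ s(u, v) = 0 := by
    intro u v h
    rw [hadj, not_lt] at h
    exact le_antisymm h (h0 _)
  -- every support edge has a tight end
  have hA : ∀ u v, H.Adj u v → ∑ w, γ s(u, w) = 1 ∨ ∑ w, γ s(v, w) = 1 := by
    intro u v h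
    by_contra! hn
    have := hpert (fun e => if e = s(u, v) then 1 else 0) (by
      intro e he
      have : e ≠ s(u, v) := by
        rintro rfl
        exact ((hadj u v).mp h).ne' he
      simp [this]) (by
      intro x hx
      have hsum := sum_single_aux u v x h.ne
      have h1 : x ≠ u := by rintro rfl; exact hn.1 hx
      have h2 : x ≠ v := by rintro rfl; exact hn.2 hx
      rw [if_neg h1, if_neg h2, add_zero] at hsum
      convert hsum)
    have := congrFun this s(u, v)
    simp at this
  have hle' : ∀ u v, ∑ w, γ s(u, w) = 1 → γ s(u, v) ≤ 1 := by
    intro u v h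
    rw [← h]
    exact Finset.single_le_sum (f := fun w => γ s(u, w)) (fun w _ => h0 _) (Finset.mem_univ v)
  have hle : ∀ u v, γ s(u, v) ≤ 1 := by
    intro u v
    by_cases h : H.Adj u v
    · rcases hA u v h with h | h
      · exact hle' u v h
      · rw [Sym2.eq_swap]; exact hle' v u h
    · rw [hnadj u v h]; norm_num
  have hB : ∀ u v w, ∑ w, γ s(u, w) = 1 → γ s(u, v) = 1 → H.Adj u w → w = v := by
    intro u v w ht h1 hw
    by_contra hne
    have : γ s(u, w) + γ s(u, v) ≤ ∑ w, γ s(u, w) := by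
      rw [← Finset.sum_pair (f := fun w => γ s(u, w)) hne]
      exact Finset.sum_le_sum_of_subset_of_nonneg (Finset.subset_univ _) (fun w _ _ => h0 _)
    have := (hadj u w).mp hw
    linarith
  set K := fracGraph H γ with hK
  have hKadj : ∀ u v, K.Adj u v ↔ H.Adj u v ∧ γ s(u, v) < 1 := fun u v => Iff.rfl
  have hG : ∀ u v w, ∑ w, γ s(u, w) = 1 → K.Adj u v → H.Adj u w → K.Adj u w := by
    intro u v w ht hv hw
    refine ⟨hw, lt_of_le_of_ne (hle u w) fun h1 => ?_⟩
    have := hB u w v ht h1 hv.1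
    subst this
    exact hv.2.ne h1
  let T : V → Prop := fun v => ∑ w, γ s(v, w) = 1 ∧ ∃ u, K.Adj v u
  have hD : ∀ v, T v → 2 ≤ K.degree v := by
    rintro v ⟨ht, u, hu⟩
    obtain ⟨w, hwu, hw⟩ : ∃ w, w ≠ u ∧ H.Adj v w := by
      by_contra! hn
      have : ∑ w, γ s(v, w) = γ s(v, u) :=
        Finset.sum_eq_single u (fun w _ hw => hnadj v w (hn w hw)) (by simp)
      rw [ht] at this
      exact hu.2.ne this.symm
    have hw' := hG v u w ht hu hw
    rw [← SimpleGraph.card_neighborFinset_eq_degree, ← Finset.card_pair hwu]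
    apply Finset.card_le_card
    intro x hx
    simp only [Finset.mem_insert, Finset.mem_singleton] at hx
    rw [SimpleGraph.mem_neighborFinset]
    rcases hx with rfl | rfl
    · exact hw'
    · exact hu
  have hsupK : ∀ f : Sym2 V → ℝ, (∀ e ∉ K.edgeSet, f e = 0) → ∀ e, γ e = 0 → f e = 0 := by
    intro f hf e he
    apply hf
    induction e with
    | _ u v =>
      intro huv
      exact ((hadj u v).mp huv.1).ne' he
  have hpertK : ∀ f : Sym2 V → ℝ, (∀ e ∉ K.edgeSet, f e = 0) →
      (∀ v, T v → ∑ u, f s(v, u) = 0) → f = 0 := by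
    intro f hf hs
    apply hpert f (hsupK f hf)
    intro v hv
    by_cases hT : T v
    · exact hs v hT
    · apply Finset.sum_eq_zero
      intro u _
      apply hf
      intro hu
      exact hT ⟨hv, u, hu⟩
  have hdeg := degree_aux K T (card_aux K T hpertK) hD
  have hF : ∀ u v, K.Adj u v → T u := by
    intro u v h
    by_contra hn
    have h1 := hdeg u
    rw [if_neg hn, ← SimpleGraph.card_neighborFinset_eq_degree, Finset.card_eq_zero] at h1
    have : v ∈ K.neighborFinset u := by rw [SimpleGraph.mem_neighborFinset]; exact h
    rw [h1] at this
    simp at this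
  have hG' : ∀ u v w, K.Adj u v → H.Adj u w → K.Adj u w :=
    fun u v w h => hG u v w (hF u v h).1 h
  have hhalf : ∀ u v, K.Adj u v → γ s(u, v) = 1 / 2 := by
    intro u v h
    have hz := hpertK (fun e => if e ∈ K.edgeSet then γ e - 1 / 2 else 0)
      (fun e he => if_neg he) (by
        intro v hv
        have h1 : ∑ u, (if s(v, u) ∈ K.edgeSet then γ s(v, u) - 1 / 2 else 0) =
            ∑ u ∈ K.neighborFinset v, (γ s(v, u) - 1 / 2) := by
          rw [← Finset.sum_filter]
          apply Finset.sum_congr _ (fun _ _ => rfl)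
          ext u; simp
        have h2 : ∑ u ∈ K.neighborFinset v, γ s(v, u) = 1 := by
          rw [← hv.1]
          apply Finset.sum_subset (Finset.subset_univ _)
          intro u _ hu
          apply hnadj
          intro hu'
          obtain ⟨w, hw⟩ := hv.2
          exact hu (by rw [SimpleGraph.mem_neighborFinset]; exact hG' v w u hw hu')
        have h3 : (K.neighborFinset v).card = 2 := by
          rw [SimpleGraph.card_neighborFinset_eq_degree, hdeg v, if_pos hv]
        rw [h1, Finset.sum_sub_distrib, h2, Finset.sum_const, h3]
        norm_num)
    have := congrFun hz s(u, v)
    simp only [Pi.zero_apply] at this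
    rw [if_pos (show s(u, v) ∈ K.edgeSet from h)] at this
    linarith
  have hodd : ∀ w (p : K.Walk w w), p.IsCycle → Odd p.length := by
    intro w p hp
    by_contra hn
    rw [Nat.not_odd_iff_even] at hn
    have hz := hpertK (altWalk p)
      (fun e he => altWalk_eq_zero p e fun h => he (p.edges_subset_edgeSet h))
      (fun v _ => by rw [sum_altWalk, hn.neg_one_pow]; ring)
    cases p with
    | nil => exact hp.ne_nil rfl
    | @cons _ b _ h q =>
      have h1 := hp.isTrail
      rw [SimpleGraph.Walk.isTrail_cons] at h1
      have := congrFun hz s(w, b)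
      simp only [altWalk] at this
      rw [if_pos trivial, altWalk_eq_zero q _ h1.2] at this
      simp at this
  have hKH : K ≤ H := fun u v h => h.1
  have hcycles : K.IsCycles := by
    rintro v ⟨u, hu⟩
    rw [← SimpleGraph.coe_neighborFinset, Set.ncard_coe_finset,
      SimpleGraph.card_neighborFinset_eq_degree, hdeg v, if_pos (hF v u hu)]
  have hreach : ∀ u x, H.Reachable u x → (∃ v, K.Adj u v) → K.Reachable u x ∧ ∃ y, K.Adj x y := by
    rintro u x ⟨p⟩ hu
    induction p with
    | nil => exact ⟨SimpleGraph.Reachable.refl _, hu⟩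
    | cons h p ih =>
      obtain ⟨v, hv⟩ := hu
      have h1 := hG' _ _ _ hv h
      obtain ⟨h2, h3⟩ := ih ⟨_, h1.symm⟩
      exact ⟨h1.reachable.trans h2, h3⟩
  have hcyc : ∀ u v, K.Adj u v → IsOddCycleComponent H u := by
    intro u v huv
    obtain ⟨p, hp, hverts⟩ := hcycles.exists_cycle_toSubgraph_verts_eq_connectedComponentSupp
      (v := u) (c := K.connectedComponentMk u) rfl ⟨v, huv⟩
    refine ⟨u, p.mapLe hKH, hp.mapLe hKH, ?_, SimpleGraph.Reachable.refl _, ?_⟩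
    · rw [SimpleGraph.Walk.length_map]; exact hodd u p hp
    · intro x y hxy hux
      obtain ⟨h1, z, hz⟩ := hreach u x hux ⟨v, huv⟩
      have hxyK := hG' x z y hz hxy
      have hx : x ∈ p.toSubgraph.verts := by
        rw [hverts]
        exact SimpleGraph.ConnectedComponent.sound h1.symm
      have hn := hp.ncard_neighborSet_toSubgraph_eq_two (p.mem_verts_toSubgraph.mp hx)
      have hsub : p.toSubgraph.neighborSet x = K.neighborSet x := by
        apply Set.eq_of_subset_of_ncard_le (p.toSubgraph.neighborSet_subset x)
        rw [hn, hcycles ⟨z, hz⟩]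
      rw [SimpleGraph.Walk.edges_mapLe_eq_edges, ← SimpleGraph.Walk.mem_edges_toSubgraph,
        SimpleGraph.Subgraph.mem_edgeSet]
      have : y ∈ p.toSubgraph.neighborSet x := by rw [hsub]; exact hxyK
      exact this
  have hstar : ∀ u v, H.Adj u v → ¬ K.Adj u v → IsSubstarComponent H u := by
    intro u v huv hnK
    have h1 : γ s(u, v) = 1 := by
      by_contra hne
      exact hnK ⟨huv, lt_of_le_of_ne (hle u v) hne⟩
    have h1' : γ s(v, u) = 1 := by rw [Sym2.eq_swap]; exact h1
    -- a non-tight vertex is the centre of a star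
    have hnt : ∀ c, ∑ w, γ s(c, w) ≠ 1 → ∀ x y, H.Adj c x → H.Adj x y → y = c := by
      intro c hc x y hcx hxy
      have hx : ∑ w, γ s(x, w) = 1 := (hA c x hcx).resolve_left hc
      have hnK' : ¬ K.Adj c x := fun h => hc (hF c x h).1
      have h1 : γ s(x, c) = 1 := by
        by_contra hne
        rw [Sym2.eq_swap] at hne
        exact hnK' ⟨hcx, lt_of_le_of_ne (hle c x) hne⟩
      exact hB x c y hx h1 hxy
    obtain ⟨c, huc, hc⟩ : ∃ c, (u = c ∨ H.Adj c u) ∧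
        ∀ x y, H.Adj c x → H.Adj x y → y = c := by
      by_cases hu : ∑ w, γ s(u, w) = 1
      · by_cases hv : ∑ w, γ s(v, w) = 1
        · refine ⟨u, Or.inl rfl, fun x y hux hxy => ?_⟩
          have := hB u v x hu h1 hux
          subst this
          exact hB x u y hv h1' hxy
        · exact ⟨v, Or.inr huv.symm, hnt v hv⟩
      · exact ⟨u, Or.inl rfl, hnt u hu⟩
    have hcl : ∀ a x, H.Reachable a x → (a = c ∨ H.Adj c a) → (x = c ∨ H.Adj c x) := by
      rintro a x ⟨p⟩ ha
      induction p with
      | nil => exact ha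
      | cons h p ih =>
        apply ih
        rcases ha with rfl | ha
        · exact Or.inr h
        · exact Or.inl (hc _ _ ha h)
    refine ⟨c, fun x y hxy hux => ?_⟩
    rcases hcl u x hux huc with h | h
    · exact Or.inl h
    · exact Or.inr (hc x y h hxy)
  refine ⟨hγ.1, ?_, ?_, ?_⟩
  · intro e
    induction e with
    | _ u v =>
      by_cases h : H.Adj u v
      · by_cases h' : K.Adj u v
        · exact Or.inr (Or.inl (hhalf u v h'))
        · right; right
          by_contra hne
          exact h' ⟨h, lt_of_le_of_ne (hle u v) hne⟩
      · exact Or.inl (hnadj u v h)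
  · intro u v huv
    by_cases h' : K.Adj u v
    · exact Or.inr (hcyc u v h')
    · exact Or.inl (hstar u v huv h')
  · intro e _
    induction e with
    | _ u v =>
      constructor
      · intro he
        have huv : H.Adj u v := (hadj u v).mpr (by rw [he]; norm_num)
        have hK' : K.Adj u v := ⟨huv, by rw [he]; norm_num⟩
        obtain ⟨w, c, h1, h2, _, h4⟩ := hcyc u v hK'
        exact ⟨w, c, h1, h2, h4 u v huv (SimpleGraph.Reachable.refl _)⟩
      · rintro ⟨w, c, h1, _, h3⟩
        have huv : H.Adj u v := c.adj_of_mem_edges h3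
        by_contra hne
        have hnK : ¬ K.Adj u v := fun h => hne (hhalf u v h)
        have hone : γ s(u, v) = 1 := by
          by_contra hne
          exact hnK ⟨huv, lt_of_le_of_ne (hle u v) hne⟩
        have hleaf : ∀ a b, a ∈ c.support → (∀ y, H.Adj a y → y = b) → False := by
          intro a b ha hb
          have h2 := h1.ncard_neighborSet_toSubgraph_eq_two ha
          have hsub : c.toSubgraph.neighborSet a ⊆ {b} := by
            intro y hy
            exact hb y (c.toSubgraph.adj_sub hy)
          have := Set.ncard_le_ncard hsub
          rw [h2, Set.ncard_singleton] at this
          omega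
        rcases hA u v huv with h | h
        · exact hleaf u v (c.fst_mem_support_of_mem_edges h3) (fun y hy => hB u v y h hone hy)
        · exact hleaf v u (c.snd_mem_support_of_mem_edges h3)
            (fun y hy => hB v u y h (by rw [Sym2.eq_swap]; exact hone) hy)
end
end

section
/- Let G be a finite simple bipartite graph with no isolated vertices. Then every basic fractional edge cover of G takes values only in {0,1}, and equals the indicator vector of an edge cover of G; consequently Adm(Γ_fec) = Adm(Γ_ec), and hence Mod_{p,σ}(Γ_fec) = Mod_{p,σ}(Γ_ec) for every p and every edge-weight function σ. -/
open Finset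

noncomputable section
open scoped Classical

variable {V : Type*}

/-- Total weight at a vertex. -/
def vsum [Fintype V] [DecidableEq V] (γ : Sym2 V → ℝ) (v : V) : ℝ :=
  ∑ e : Sym2 V, if v ∈ e then γ e else 0

lemma vsum_eq [Fintype V] [DecidableEq V] (G : SimpleGraph V) (γ : Sym2 V → ℝ)
    (h0 : ∀ e ∉ G.edgeSet, γ e = 0) (v : V) :
    ∑ e ∈ G.incidenceFinset v, γ e = vsum γ v := by
  unfold vsum
  rw [← Finset.sum_filter]
  apply Finset.sum_subset
  · intro e he
    rw [SimpleGraph.mem_incidenceFinset] at he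
    simp [he.2]
  · intro e he hne
    apply h0
    intro hE
    apply hne
    rw [SimpleGraph.mem_incidenceFinset]
    exact ⟨hE, by simpa using he⟩

/-- The polytope of fractional edge covers bounded by one. -/
def fecPoly [Fintype V] [DecidableEq V] (G : SimpleGraph V) : Set (Sym2 V → ℝ) :=
  {γ | (∀ e, 0 ≤ γ e) ∧ (∀ e, γ e ≤ 1) ∧ (∀ e ∉ G.edgeSet, γ e = 0) ∧ ∀ v, 1 ≤ vsum γ v}

lemma sum_mem_edge [Fintype V] [DecidableEq V] (f : V → ℝ) (a b : V) (hab : a ≠ b) :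
    (∑ v : V, if v ∈ s(a, b) then f v else 0) = f a + f b := by
  rw [← Finset.sum_filter]
  have : (univ.filter fun v => v ∈ s(a, b)) = {a, b} := by
    ext v; simp
  rw [this, Finset.sum_pair hab]

/-- The linear-algebra core: in a bipartite graph, a nonempty set `F` of edges such that every
vertex of `T` has `F`-degree at least two supports a nonzero vector balanced on `T`. -/
lemma exists_direction [Fintype V] [DecidableEq V] (G : SimpleGraph V) (hbip : G.Colorable 2)
    (F : Finset (Sym2 V)) (hF : ∀ e ∈ F, e ∈ G.edgeSet) (hne : F.Nonempty)
    (T : Finset V) (hT : ∀ v ∈ T, 2 ≤ (F.filter fun e => v ∈ e).card) :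
    ∃ d : Sym2 V → ℝ, d ≠ 0 ∧ (∀ e ∉ F, d e = 0) ∧ ∀ v ∈ T, vsum d v = 0 := by
  obtain ⟨col⟩ := hbip
  let L : (F → ℝ) →ₗ[ℝ] (T → ℝ) :=
    { toFun := fun x v => ∑ e : F, if (v : V) ∈ (e : Sym2 V) then x e else 0
      map_add' := by
        intro x y; ext v
        simp only [Pi.add_apply, ← Finset.sum_add_distrib]
        refine Finset.sum_congr rfl fun e _ => ?_
        split_ifs <;> simp
      map_smul' := by
        intro c x; ext v
        simp only [Pi.smul_apply, smul_eq_mul, Finset.mul_sum, RingHom.id_apply]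
        refine Finset.sum_congr rfl fun e _ => ?_
        split_ifs <;> simp }
  have hL : ∀ x v, L x v = ∑ e : F, if (v : V) ∈ (e : Sym2 V) then x e else 0 := fun _ _ => rfl
  by_cases hinj : Function.Injective L
  · exfalso
    have hcard : F.card ≤ T.card := by
      have := LinearMap.finrank_le_finrank_of_injective hinj
      simpa using this
    have hdeg : ∑ v : V, ((F.filter fun e => v ∈ e).card : ℝ) = 2 * F.card := by
      have : ∀ v : V, ((F.filter fun e => v ∈ e).card : ℝ)
          = ∑ e ∈ F, if v ∈ e then (1 : ℝ) else 0 := by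
        intro v; simp
      simp_rw [this]
      rw [Finset.sum_comm]
      have h2 : ∀ e ∈ F, (∑ v : V, if v ∈ e then (1 : ℝ) else 0) = 2 := by
        intro e he
        have hE := hF e he
        induction e using Sym2.ind with
        | _ a b =>
          rw [sum_mem_edge (fun _ => (1 : ℝ)) a b (G.ne_of_adj hE)]; norm_num
      rw [Finset.sum_congr rfl h2]; simp [mul_comm]
    have hTdeg : (2 : ℝ) * T.card ≤ ∑ v ∈ T, ((F.filter fun e => v ∈ e).card : ℝ) := by
      have : ∑ v ∈ T, (2 : ℝ) ≤ ∑ v ∈ T, ((F.filter fun e => v ∈ e).card : ℝ) :=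
        Finset.sum_le_sum fun v hv => by exact_mod_cast hT v hv
      simpa [mul_comm] using this
    have hcard' : (F.card : ℝ) ≤ T.card := by exact_mod_cast hcard
    have hsplit := Finset.sum_add_sum_compl T fun v => ((F.filter fun e => v ∈ e).card : ℝ)
    have hcompl0 : 0 ≤ ∑ v ∈ Tᶜ, ((F.filter fun e => v ∈ e).card : ℝ) :=
      Finset.sum_nonneg fun _ _ => by positivity
    have hz : ∑ v ∈ Tᶜ, ((F.filter fun e => v ∈ e).card : ℝ) = 0 := by linarith
    have hcardeq : F.card = T.card := by
      have : (F.card : ℝ) = T.card := by linarith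
      exact_mod_cast this
    have hall : ∀ e ∈ F, ∀ v ∈ e, v ∈ T := by
      intro e he v hv
      by_contra hvT
      have := (Finset.sum_eq_zero_iff_of_nonneg (fun _ _ => by positivity)).1 hz v (by simpa using hvT)
      have h0 : (F.filter fun e => v ∈ e).card = 0 := by exact_mod_cast this
      rw [Finset.card_eq_zero] at h0
      have : e ∈ F.filter fun e => v ∈ e := by simp [he, hv]
      rw [h0] at this
      simp at this
    have hsurj : Function.Surjective L :=
      (LinearMap.injective_iff_surjective_of_finrank_eq_finrank (by simpa using hcardeq)).1 hinj
    obtain ⟨e0, he0⟩ := hne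
    obtain ⟨v0, hv0⟩ : ∃ v, v ∈ e0 := ⟨_, e0.out_fst_mem⟩
    have hv0T := hall e0 he0 v0 hv0
    obtain ⟨x, hx⟩ := hsurj (Pi.single ⟨v0, hv0T⟩ 1)
    let s : V → ℝ := fun v => if col v = 0 then 1 else -1
    have h1 : ∑ v : T, s v * L x v = s v0 := by
      rw [hx, Finset.sum_eq_single ⟨v0, hv0T⟩]
      · simp
      · intro b _ hb; simp [hb]
      · simp
    have h2 : ∑ v : T, s v * L x v = 0 := by
      simp_rw [hL, Finset.mul_sum]
      rw [Finset.sum_comm]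
      apply Finset.sum_eq_zero
      rintro ⟨e, he⟩ _
      have : ∀ v : T, (s v * if (v : V) ∈ e then x ⟨e, he⟩ else 0)
          = (if (v : V) ∈ e then s v else 0) * x ⟨e, he⟩ := by
        intro v; split_ifs <;> simp
      simp only [this]
      rw [← Finset.sum_mul]
      have hs : (∑ v : T, if (v : V) ∈ e then s v else 0) = 0 := by
        rw [Finset.sum_coe_sort T (fun v => if v ∈ e then s v else 0)]
        rw [Finset.sum_subset (Finset.subset_univ T)]
        · have hE := hF e he
          clear this
          induction e using Sym2.ind with
          | _ a b =>
            rw [sum_mem_edge s a b (G.ne_of_adj hE)]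
            have hc := col.valid hE
            simp only [s]
            generalize col a = i at *
            generalize col b = j at *
            fin_cases i <;> fin_cases j <;> simp_all
        · intro v _ hvT
          rw [if_neg]
          exact fun h => hvT (hall e he v h)
      rw [hs, zero_mul]
    have h3 : s v0 ≠ 0 := by
      simp only [s]; split_ifs <;> norm_num
    exact h3 (h1.symm.trans h2)
  · obtain ⟨x, hx0, hx⟩ : ∃ x, L x = 0 ∧ x ≠ 0 := by
      by_contra hcon
      push Not at hcon
      exact hinj ((injective_iff_map_eq_zero L).2 hcon)
    refine ⟨fun e => if h : e ∈ F then x ⟨e, h⟩ else 0, ?_, ?_, ?_⟩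
    · intro h
      apply hx
      ext e
      have := congrFun h e.1
      simpa using this
    · intro e he; simp [he]
    · intro v hv
      have := congrFun hx0 ⟨v, hv⟩
      rw [hL] at this
      unfold vsum
      rw [← Finset.sum_subset (Finset.subset_univ F), ← Finset.sum_coe_sort F]
      · simpa using this
      · intro e _ he; simp [he]

lemma vsum_add_smul [Fintype V] [DecidableEq V] (γ d : Sym2 V → ℝ) (t : ℝ) (v : V) :
    vsum (γ + t • d) v = vsum γ v + t * vsum d v := by
  unfold vsum
  rw [Finset.mul_sum, ← Finset.sum_add_distrib]
  refine Finset.sum_congr rfl fun e _ => ?_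
  split_ifs <;> simp

/-- Extreme points of the polytope are integral. -/
lemma extreme_integral [Fintype V] [DecidableEq V] (G : SimpleGraph V) (hbip : G.Colorable 2)
    (γ : Sym2 V → ℝ) (hγ : γ ∈ (fecPoly G).extremePoints ℝ) : ∀ e, γ e = 0 ∨ γ e = 1 := by
  by_contra hcon
  push Not at hcon
  obtain ⟨e0, h00, h01⟩ := hcon
  obtain ⟨⟨hn, hle, hoff, hcov⟩, hext⟩ := mem_extremePoints.1 hγ
  let F : Finset (Sym2 V) := univ.filter fun e => γ e ≠ 0 ∧ γ e ≠ 1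
  let T : Finset V := univ.filter fun v => vsum γ v = 1 ∧ ∃ e ∈ F, v ∈ e
  have hFmem : ∀ e, e ∈ F ↔ γ e ≠ 0 ∧ γ e ≠ 1 := by intro e; simp [F]
  have hF : ∀ e ∈ F, e ∈ G.edgeSet := by
    intro e he
    by_contra h
    exact ((hFmem e).1 he).1 (hoff e h)
  have hT : ∀ v ∈ T, 2 ≤ (F.filter fun e => v ∈ e).card := by
    intro v hv
    obtain ⟨hv1, e, he, hve⟩ := (Finset.mem_filter.1 hv).2
    by_contra hlt
    have huniq : ∀ e' ∈ F, v ∈ e' → e' = e := by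
      intro e' he' hve'
      exact Finset.card_le_one.1 (Nat.le_of_lt_succ (not_le.1 hlt)) e' (by simp [he', hve']) e (by simp [he, hve])
    have hsum : vsum γ v = γ e + ∑ e' ∈ univ.erase e, if v ∈ e' then γ e' else 0 := by
      unfold vsum
      rw [← Finset.add_sum_erase _ _ (Finset.mem_univ e), if_pos hve]
    have hnn : ∀ e' ∈ univ.erase e, 0 ≤ if v ∈ e' then γ e' else 0 := by
      intro e' _; split_ifs
      · exact hn e'
      · exact le_rfl
    have hepos : 0 < γ e := lt_of_le_of_ne (hn e) (Ne.symm ((hFmem e).1 he).1)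
    have helt : γ e < 1 := lt_of_le_of_ne (hle e) ((hFmem e).1 he).2
    by_cases hex : ∃ e' ∈ univ.erase e, v ∈ e' ∧ γ e' = 1
    · obtain ⟨e', he', hve', h1⟩ := hex
      have := Finset.single_le_sum hnn he'
      rw [if_pos hve', h1] at this
      linarith
    · push Not at hex
      have : (∑ e' ∈ univ.erase e, if v ∈ e' then γ e' else 0) = 0 := by
        apply Finset.sum_eq_zero
        intro e' he'
        split_ifs with hve'
        · by_contra h0
          exact (Finset.ne_of_mem_erase he') (huniq e' ((hFmem e').2 ⟨h0, hex e' he' hve'⟩) hve')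
        · rfl
      linarith
  obtain ⟨d, hd0, hdF, hdT⟩ := exists_direction G hbip F hF ⟨e0, (hFmem e0).2 ⟨h00, h01⟩⟩ T hT
  have hev : ∀ᶠ t : ℝ in nhds 0, γ + t • d ∈ fecPoly G := by
    have hcont : ∀ e, Filter.Tendsto (fun t : ℝ => γ e + t * d e) (nhds 0) (nhds (γ e)) := by
      intro e
      have : Continuous fun t : ℝ => γ e + t * d e := by fun_prop
      simpa using this.tendsto 0
    have hcontv : ∀ v, Filter.Tendsto (fun t : ℝ => vsum γ v + t * vsum d v) (nhds 0)
        (nhds (vsum γ v)) := by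
      intro v
      have : Continuous fun t : ℝ => vsum γ v + t * vsum d v := by fun_prop
      simpa using this.tendsto 0
    have hA : ∀ᶠ t : ℝ in nhds 0, ∀ e, 0 ≤ γ e + t * d e := by
      rw [Filter.eventually_all]
      intro e
      by_cases he : e ∈ F
      · have : 0 < γ e := lt_of_le_of_ne (hn e) (Ne.symm ((hFmem e).1 he).1)
        exact ((hcont e).eventually_const_lt this).mono fun _ h => le_of_lt h
      · simp [hdF e he, hn e]
    have hB : ∀ᶠ t : ℝ in nhds 0, ∀ e, γ e + t * d e ≤ 1 := by
      rw [Filter.eventually_all]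
      intro e
      by_cases he : e ∈ F
      · have : γ e < 1 := lt_of_le_of_ne (hle e) ((hFmem e).1 he).2
        exact ((hcont e).eventually_lt_const this).mono fun _ h => le_of_lt h
      · simp [hdF e he, hle e]
    have hC : ∀ᶠ t : ℝ in nhds 0, ∀ v, 1 ≤ vsum γ v + t * vsum d v := by
      rw [Filter.eventually_all]
      intro v
      by_cases hv : vsum γ v = 1
      · have hdv : vsum d v = 0 := by
          by_cases hvT : v ∈ T
          · exact hdT v hvT
          · unfold vsum
            apply Finset.sum_eq_zero
            intro e _
            split_ifs with hve
            · apply hdF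
              intro he
              exact hvT (Finset.mem_filter.2 ⟨Finset.mem_univ _, hv, e, he, hve⟩)
            · rfl
        simp [hdv, hv]
      · have : 1 < vsum γ v := lt_of_le_of_ne (hcov v) (Ne.symm hv)
        exact ((hcontv v).eventually_const_lt this).mono fun _ h => le_of_lt h
    filter_upwards [hA, hB, hC] with t a b c
    refine ⟨fun e => by simpa using a e, fun e => by simpa using b e, ?_, ?_⟩
    · intro e he
      have : e ∉ F := fun h => he (hF e h)
      simp [hoff e he, hdF e this]
    · intro v; rw [vsum_add_smul]; exact c v
  obtain ⟨ε, hε, hball⟩ := Metric.eventually_nhds_iff.1 hev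
  have hp : γ + (ε / 2) • d ∈ fecPoly G := hball (by
    rw [Real.dist_eq, sub_zero, abs_of_pos (by positivity)]; linarith)
  have hm : γ + (-(ε / 2)) • d ∈ fecPoly G := hball (by
    rw [Real.dist_eq, sub_zero, abs_neg, abs_of_pos (by positivity)]; linarith)
  have := (hext _ hp _ hm ⟨1 / 2, 1 / 2, by norm_num, by norm_num, by norm_num, by
    ext e; simp; ring⟩).1
  apply hd0
  have h2 : (ε / 2) • d = 0 := by simpa using this
  rcases smul_eq_zero.1 h2 with h | h
  · linarith
  · exact h

lemma isCompact_fecPoly [Fintype V] [DecidableEq V] (G : SimpleGraph V) :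
    IsCompact (fecPoly G) := by
  have hsub : fecPoly G ⊆ Set.Icc (0 : Sym2 V → ℝ) 1 := fun γ h => ⟨h.1, h.2.1⟩
  refine isCompact_Icc.of_isClosed_subset ?_ hsub
  unfold fecPoly
  simp only [Set.setOf_and, Set.setOf_forall]
  refine IsClosed.inter ?_ (IsClosed.inter ?_ (IsClosed.inter ?_ ?_))
  · exact isClosed_iInter fun e => isClosed_le continuous_const (continuous_apply e)
  · exact isClosed_iInter fun e => isClosed_le (continuous_apply e) continuous_const
  · exact isClosed_iInter fun e => isClosed_iInter fun _ =>
      isClosed_eq (continuous_apply e) continuous_const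
  · refine isClosed_iInter fun v => isClosed_le continuous_const ?_
    unfold vsum
    refine continuous_finsetSum _ fun e _ => ?_
    split_ifs
    · exact continuous_apply e
    · exact continuous_const

lemma integral_cover [Fintype V] [DecidableEq V] (G : SimpleGraph V) (γ : Sym2 V → ℝ)
    (hγ : γ ∈ Γfec G) (h01 : ∀ e, γ e = 0 ∨ γ e = 1) :
    ∃ C : Finset (Sym2 V), IsEdgeCover G C ∧ γ = fun e => if e ∈ C then 1 else 0 := by
  obtain ⟨hn, hoff, hcov⟩ := hγ
  refine ⟨univ.filter fun e => γ e = 1, ⟨?_, ?_⟩, ?_⟩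
  · intro e he
    have he1 : γ e = 1 := by simpa using he
    by_contra h
    rw [hoff e h] at he1
    norm_num at he1
  · intro v
    by_contra hcon
    push Not at hcon
    have : ∑ e ∈ G.incidenceFinset v, γ e = 0 := by
      apply Finset.sum_eq_zero
      intro e he
      rw [SimpleGraph.mem_incidenceFinset] at he
      rcases h01 e with h | h
      · exact h
      · exact absurd he.2 (hcon e (by simp [h]))
    have := hcov v
    linarith
  · ext e
    rcases h01 e with h | h <;> simp [h]

lemma ec_subset_fec [Fintype V] [DecidableEq V] (G : SimpleGraph V) : Γec G ⊆ Γfec G := by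
  rintro γ ⟨C, ⟨hC, hcov⟩, rfl⟩
  refine ⟨fun e => by positivity, ?_, ?_⟩
  · intro e he
    exact if_neg fun h => he (hC h)
  · intro v
    obtain ⟨e, he, hve⟩ := hcov v
    have hmem : e ∈ G.incidenceFinset v := by
      rw [SimpleGraph.mem_incidenceFinset]; exact ⟨hC he, hve⟩
    have := Finset.single_le_sum (f := fun e => if e ∈ C then (1 : ℝ) else 0)
      (fun e _ => by positivity) hmem
    simpa [he] using this

lemma fec_dominates [Fintype V] [DecidableEq V] (G : SimpleGraph V) (hbip : G.Colorable 2)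
    (ρ : Sym2 V → ℝ) (hρ : ∀ e, 0 ≤ ρ e) (γ : Sym2 V → ℝ) (hγ : γ ∈ Γfec G) :
    ∃ γ' ∈ Γec G, ∑ e ∈ G.edgeFinset, γ' e * ρ e ≤ ∑ e ∈ G.edgeFinset, γ e * ρ e := by
  obtain ⟨hn, hoff, hcov⟩ := hγ
  have hmin : (fun e => min (γ e) 1) ∈ fecPoly G := by
    refine ⟨fun e => le_min (hn e) zero_le_one, fun e => min_le_right _ _,
      fun e he => by simp [hoff e he], ?_⟩
    intro v
    have hc := hcov v
    rw [vsum_eq G γ hoff] at hc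
    by_cases hbig : ∃ e, v ∈ e ∧ 1 ≤ γ e
    · obtain ⟨e, hve, he⟩ := hbig
      have := Finset.single_le_sum (f := fun e => if v ∈ e then min (γ e) 1 else 0)
        (fun e _ => by
          split_ifs
          · exact le_min (hn e) zero_le_one
          · exact le_rfl) (Finset.mem_univ e)
      simpa [hve, he, vsum] using this
    · push Not at hbig
      refine hc.trans (le_of_eq ?_)
      unfold vsum
      refine Finset.sum_congr rfl fun e _ => ?_
      split_ifs with hve
      · exact (min_eq_left (hbig e hve).le).symm
      · rfl
  let l : StrongDual ℝ (Sym2 V → ℝ) :=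
    -∑ e ∈ G.edgeFinset, ρ e • ContinuousLinearMap.proj (R := ℝ) (φ := fun _ : Sym2 V => ℝ) e
  have hl : ∀ x, l x = -∑ e ∈ G.edgeFinset, x e * ρ e := by
    intro x
    simp [l, mul_comm]
  have hK := isCompact_fecPoly G
  have hexp : IsExposed ℝ (fecPoly G) (l.toExposed (fecPoly G)) :=
    ContinuousLinearMap.toExposed.isExposed
  obtain ⟨m, hmK, hm⟩ := hK.exists_isMaxOn ⟨_, hmin⟩ l.continuous.continuousOn
  obtain ⟨x, hx⟩ := (hexp.isCompact hK).extremePoints_nonempty ⟨m, hmK, fun y hy => hm hy⟩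
  have hxK := hexp.isExtreme.extremePoints_subset_extremePoints hx
  have h01 := extreme_integral G hbip x hxK
  obtain ⟨⟨a, -, c, d⟩, hopt⟩ := hx.1
  refine ⟨x, integral_cover G x ⟨a, c, fun v => ?_⟩ h01, ?_⟩
  · rw [vsum_eq G x c]; exact d v
  · have := hopt _ hmin
    rw [hl, hl] at this
    have h2 : ∑ e ∈ G.edgeFinset, min (γ e) 1 * ρ e ≤ ∑ e ∈ G.edgeFinset, γ e * ρ e :=
      Finset.sum_le_sum fun e _ => mul_le_mul_of_nonneg_right (min_le_left _ _) (hρ e)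
    linarith

/-- For a bipartite graph: every basic fractional edge cover takes values only in `{0,1}`
and is the indicator vector of an edge cover; consequently `Adm(Γ_fec) = Adm(Γ_ec)` and
`Mod_{p,σ}(Γ_fec) = Mod_{p,σ}(Γ_ec)` for every `p` and every positive weight `σ`. -/
theorem bipartite_fec_eq_ec [Fintype V] [DecidableEq V] (G : SimpleGraph V)
    (hiso : ∀ v : V, ∃ u, G.Adj v u) (hbip : G.Colorable 2) :
    (∀ γ : Sym2 V → ℝ, IsBasicFEC G γ →
      (∀ e, γ e = 0 ∨ γ e = 1) ∧
      ∃ C : Finset (Sym2 V), IsEdgeCover G C ∧ γ = fun e => if e ∈ C then 1 else 0) ∧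
    Adm G (Γfec G) = Adm G (Γec G) ∧
    ∀ p : ℝ, 1 ≤ p → ∀ σ : Sym2 V → ℝ, (∀ e, 0 < σ e) →
      Modulus p σ G (Γfec G) = Modulus p σ G (Γec G) := by
  have hadm : Adm G (Γfec G) = Adm G (Γec G) := by
    ext ρ
    constructor
    · rintro ⟨h1, h2, h3⟩
      exact ⟨h1, h2, fun γ hγ => h3 γ (ec_subset_fec G hγ)⟩
    · rintro ⟨h1, h2, h3⟩
      refine ⟨h1, h2, fun γ hγ => ?_⟩
      obtain ⟨γ', hγ', hle⟩ := fec_dominates G hbip ρ h1 γ hγ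
      exact (h3 γ' hγ').trans hle
  refine ⟨?_, hadm, ?_⟩
  · rintro γ ⟨hfec, hval, -, hcyc⟩
    have h01 : ∀ e, γ e = 0 ∨ γ e = 1 := by
      intro e
      rcases hval e with h | h | h
      · exact Or.inl h
      · exfalso
        have hE : e ∈ G.edgeSet := by
          by_contra hne
          rw [hfec.2.1 e hne] at h
          norm_num at h
        obtain ⟨w, c, -, hodd, -⟩ := (hcyc e hE).1 h
        have hle : suppGraph G γ ≤ G := fun u v huv => huv.1
        have heven := SimpleGraph.two_colorable_iff_forall_loop_even.1 (hbip.mono_left hle) w c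
        exact (Nat.not_even_iff_odd.2 hodd) heven
      · exact Or.inr h
    exact ⟨h01, integral_cover G γ hfec h01⟩
  · intro p _ σ _
    unfold Modulus
    rw [hadm]
end
end

section
/- Let C be a cycle graph with k ≥ 3 vertices and k edges, and let γ be a minimal edge cover of C (an edge cover such that no proper subset of γ is an edge cover). Then |γ| ≤ 2k/3, i.e., 3|γ| ≤ 2k. -/
open Finset

noncomputable section
open scoped Classical

variable {V : Type*}

/-- A minimal edge cover `C` of a cycle with `k` vertices satisfies `|C| ≤ 2k/3`. -/
theorem minimal_edgeCover_cycle_card_le [Fintype V] [DecidableEq V] (G : SimpleGraph V)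
    [DecidableRel G.Adj] (k : ℕ) (hk : 3 ≤ k) (hcard : Fintype.card V = k)
    (hconn : G.Connected) (hdeg : ∀ v : V, G.degree v = 2)
    (C : Finset (Sym2 V)) (hC : IsEdgeCover G C)
    (hmin : ∀ C' : Finset (Sym2 V), C' ⊂ C → ¬ IsEdgeCover G C') :
    3 * C.card ≤ 2 * k := by
  have hpriv : ∀ e ∈ C, ∃ v, v ∈ e ∧ ∀ e' ∈ C, v ∈ e' → e' = e := by
    intro e he
    by_contra hcon
    push Not at hcon
    refine hmin (C.erase e) (Finset.erase_ssubset he) ⟨?_, ?_⟩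
    · intro x hx
      exact hC.1 (Finset.mem_coe.2 (Finset.mem_of_mem_erase (Finset.mem_coe.1 hx)))
    · intro v
      obtain ⟨e₁, he₁, hv⟩ := hC.2 v
      by_cases h : e₁ = e
      · subst h
        obtain ⟨e₂, h2, hv2, hne⟩ := hcon v hv
        exact ⟨e₂, Finset.mem_erase.2 ⟨hne, h2⟩, hv2⟩
      · exact ⟨e₁, Finset.mem_erase.2 ⟨h, he₁⟩, hv⟩
  have hle : ∀ v, (C.filter (fun e => v ∈ e)).card ≤ 2 := by
    intro v
    rw [← hdeg v, ← SimpleGraph.card_incidenceFinset_eq_degree]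
    apply Finset.card_le_card
    intro e he
    rw [Finset.mem_filter] at he
    rw [SimpleGraph.mem_incidenceFinset]
    exact ⟨hC.1 he.1, he.2⟩
  have hsum : ∑ v : V, (C.filter (fun e => v ∈ e)).card = ∑ e ∈ C, 2 := by
    have := Finset.sum_card_bipartiteAbove_eq_sum_card_bipartiteBelow
      (s := (Finset.univ : Finset V)) (t := C) (fun v e => v ∈ e)
    unfold Finset.bipartiteAbove Finset.bipartiteBelow at this
    rw [this]
    refine Finset.sum_congr rfl fun e he => ?_
    rw [← Sym2.card_toFinset_of_not_isDiag e (G.not_isDiag_of_mem_edgeSet (hC.1 he))]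
    congr 1
    ext v
    simp
  haveI : Nonempty V := hconn.nonempty
  choose! f hf using hpriv
  have hA : C.card ≤ (Finset.univ.filter
      (fun v : V => (C.filter (fun e => v ∈ e)).card = 1)).card := by
    apply Finset.card_le_card_of_injOn f
    · intro e he
      have he' : e ∈ C := he
      have : C.filter (fun e' => f e ∈ e') = {e} := by
        ext e'
        simp only [Finset.mem_filter, Finset.mem_singleton]
        constructor
        · rintro ⟨h1, h2⟩
          exact (hf e he').2 e' h1 h2
        · rintro rfl
          exact ⟨he', (hf _ he').1⟩
      simp [this]
    · intro e he e' he' h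
      exact (hf e' he').2 e he (h ▸ (hf e he).1)
  have hbound : ∑ v : V, ((C.filter (fun e => v ∈ e)).card +
      if (C.filter (fun e => v ∈ e)).card = 1 then 1 else 0) ≤ ∑ v : V, 2 := by
    refine Finset.sum_le_sum fun v _ => ?_
    have := hle v
    split_ifs <;> omega
  rw [Finset.sum_add_distrib, hsum, ← Finset.card_filter] at hbound
  simp only [Finset.sum_const, Finset.card_univ, hcard, smul_eq_mul] at hbound
  omega
end
end

section
/- Let C be the edge set of a cycle in a graph, let Γ_ec(C) be the (nonempty, finite) set of edge covers of the cycle C, and let ρ : C → ℝ_{≥0}. Then (1/2)·Σ_{e∈C} ρ(e) ≥ (3/4)·min_{γ∈Γ_ec(C)} ℓ_ρ(γ), where ℓ_ρ(γ) = Σ_{e∈γ} ρ(e). -/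
open Finset

noncomputable section
open scoped Classical

variable {V : Type*}

lemma other_edge [Fintype V] [DecidableEq V] (G : SimpleGraph V)
    [DecidableRel G.Adj] (hdeg : ∀ v : V, G.degree v = 2) (v : V) (e : Sym2 V)
    (he : e ∈ G.edgeSet) (hv : v ∈ e) :
    ∃ a, a ≠ e ∧ a ∈ G.edgeSet ∧ v ∈ a ∧ ∀ f ∈ G.edgeSet, v ∈ f → f ≠ e → f = a := by
  have h := G.card_incidenceFinset_eq_degree v
  rw [hdeg v, Finset.card_eq_two] at h
  obtain ⟨a, b, hab, h⟩ := h
  have key : ∀ f, (f ∈ G.edgeSet ∧ v ∈ f) ↔ (f = a ∨ f = b) := by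
    intro f
    have := G.mem_incidenceFinset v f
    rw [h] at this
    simp only [Finset.mem_insert, Finset.mem_singleton] at this
    exact this.symm
  have ha := (key a).2 (Or.inl rfl)
  have hb := (key b).2 (Or.inr rfl)
  rcases (key e).1 ⟨he, hv⟩ with rfl | rfl
  · exact ⟨b, hab.symm, hb.1, hb.2, fun f hf hvf hne => ((key f).1 ⟨hf, hvf⟩).resolve_left hne⟩
  · exact ⟨a, hab, ha.1, ha.2, fun f hf hvf hne => ((key f).1 ⟨hf, hvf⟩).resolve_right hne⟩

/-- Greedy proper edge colouring with three colours. -/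
lemma exists_coloring [Fintype V] [DecidableEq V] (G : SimpleGraph V)
    [DecidableRel G.Adj] (hdeg : ∀ v : V, G.degree v = 2) (S : Finset (Sym2 V)) :
    (∀ e ∈ S, e ∈ G.edgeSet) → ∃ c : Sym2 V → Fin 3, ∀ e ∈ S, ∀ f ∈ S, ∀ v, v ∈ e → v ∈ f →
      e ≠ f → c e ≠ c f := by
  induction S using Finset.induction_on with
  | empty => intro _; exact ⟨fun _ => 0, by simp⟩
  | insert e S heS ih =>
    intro hS
    obtain ⟨c, hc⟩ := ih (fun f hf => hS f (Finset.mem_insert_of_mem hf))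
    have he := hS e (Finset.mem_insert_self _ _)
    have hk : ∀ x y : Fin 3, ∃ k, k ≠ x ∧ k ≠ y := by decide
    have hcol : ∃ k : Fin 3, ∀ f ∈ S, ∀ v, v ∈ e → v ∈ f → k ≠ c f := by
      induction e using Sym2.ind with
      | _ u w =>
        obtain ⟨a, -, -, -, ha⟩ := other_edge G hdeg u s(u, w) he (by simp)
        obtain ⟨b, -, -, -, hb⟩ := other_edge G hdeg w s(u, w) he (by simp)
        obtain ⟨k, hka, hkb⟩ := hk (c a) (c b)
        refine ⟨k, fun f hf v hve hvf => ?_⟩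
        have hfe : f ≠ s(u, w) := fun h => heS (h ▸ hf)
        have hfG := hS f (Finset.mem_insert_of_mem hf)
        rcases Sym2.mem_iff.1 hve with rfl | rfl
        · rw [ha f hfG hvf hfe]; exact hka
        · rw [hb f hfG hvf hfe]; exact hkb
    obtain ⟨k, hk⟩ := hcol
    refine ⟨fun f => if f = e then k else c f, fun f hf g hg v hvf hvg hne => ?_⟩
    rcases Finset.mem_insert.1 hf with rfl | hfS <;>
      rcases Finset.mem_insert.1 hg with rfl | hgS
    · exact absurd rfl hne
    · simpa [hne.symm] using hk g hgS v hvf hvg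
    · simpa [hne] using (hk f hfS v hvg hvf).symm
    · have h1 : f ≠ e := fun h => heS (h ▸ hfS)
      have h2 : g ≠ e := fun h => heS (h ▸ hgS)
      simpa [h1, h2] using hc f hfS g hgS v hvf hvg hne

/-- For a cycle `C` and `ρ : C → ℝ_{≥0}`,
`(1/2) Σ_{e ∈ C} ρ(e) ≥ (3/4) min_{γ ∈ Γ_ec(C)} ℓ_ρ(γ)`. -/
theorem half_sum_ge_min_edgeCover [Fintype V] [DecidableEq V] (G : SimpleGraph V)
    [DecidableRel G.Adj] (hconn : G.Connected) (hdeg : ∀ v : V, G.degree v = 2)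
    (ρ : Sym2 V → ℝ) (hρ : ∀ e, 0 ≤ ρ e) :
    (3 / 4 : ℝ) * sInf {x : ℝ | ∃ C : Finset (Sym2 V), IsEdgeCover G C ∧ x = ∑ e ∈ C, ρ e}
      ≤ (1 / 2 : ℝ) * ∑ e ∈ G.edgeFinset, ρ e := by
  obtain ⟨c, hc⟩ := exists_coloring G hdeg G.edgeFinset (fun e he => by simpa using he)
  have hcov : ∀ i : Fin 3, IsEdgeCover G (G.edgeFinset.filter (fun e => c e ≠ i)) := by
    intro i
    refine ⟨fun e he => ?_, fun v => ?_⟩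
    · simp only [Finset.coe_filter, Set.mem_setOf_eq, SimpleGraph.mem_edgeFinset] at he
      exact he.1
    · have hpos : 0 < G.degree v := by rw [hdeg v]; norm_num
      obtain ⟨w, hw⟩ := (G.degree_pos_iff_exists_adj v).1 hpos
      have he : s(v, w) ∈ G.edgeSet := hw
      obtain ⟨a, hne, ha, hva, -⟩ := other_edge G hdeg v s(v, w) he (by simp)
      have hcc := hc a (by simpa using ha) s(v, w) (by simpa using he) v hva (by simp) hne
      by_cases h : c a = i
      · exact ⟨s(v, w), Finset.mem_filter.2 ⟨by simpa using he, fun h' => hcc (h.trans h'.symm)⟩,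
          by simp⟩
      · exact ⟨a, Finset.mem_filter.2 ⟨by simpa using ha, h⟩, hva⟩
  have hbdd : BddBelow {x : ℝ | ∃ C : Finset (Sym2 V), IsEdgeCover G C ∧ x = ∑ e ∈ C, ρ e} := by
    refine ⟨0, ?_⟩
    rintro x ⟨C, -, rfl⟩
    exact Finset.sum_nonneg (fun e _ => hρ e)
  have hle := fun i : Fin 3 => csInf_le hbdd ⟨_, hcov i, rfl⟩
  have hsum : ∑ i : Fin 3, ∑ e ∈ G.edgeFinset.filter (fun e => c e ≠ i), ρ e
      = 2 * ∑ e ∈ G.edgeFinset, ρ e := by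
    simp only [Finset.sum_filter]
    rw [Finset.sum_comm, Finset.mul_sum]
    refine Finset.sum_congr rfl (fun e _ => ?_)
    generalize c e = j
    rw [Fin.sum_univ_three]
    fin_cases j <;> simp <;> ring
  rw [Fin.sum_univ_three] at hsum
  have h0 := hle 0
  have h1 := hle 1
  have h2 := hle 2
  linarith
end
end

section
/- Let G be a finite simple graph with no isolated vertices. If a density ρ ∈ ℝ^E_{≥0} is admissible for the family Γ_ec of edge covers of G, then the density (4/3)·ρ is admissible for the family Γ_bfec of basic fractional edge covers of G (equivalently, for all fractional edge covers of G). -/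
open Finset

noncomputable section
open scoped Classical

variable {V : Type*}

theorem aux_color [DecidableEq V] (S : Finset (Sym2 V))
    (h : ∀ v : V, (S.filter (fun e => v ∈ e)).card ≤ 2) :
    ∃ c : Sym2 V → Fin 3, ∀ e ∈ S, ∀ f ∈ S, ∀ v, v ∈ e → v ∈ f → e ≠ f → c e ≠ c f := by
  induction S using Finset.induction_on with
  | empty => exact ⟨fun _ => 0, by simp⟩
  | insert e S he ih =>
    obtain ⟨c, hc⟩ := ih (fun v => le_trans (card_le_card
      (filter_subset_filter _ (subset_insert e S))) (h v))
    have hone : ∀ v ∈ e, (S.filter (fun f => v ∈ f)).card ≤ 1 := by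
      intro v hv
      have := h v
      rw [filter_insert, if_pos hv, card_insert_of_notMem (by simp [he])] at this
      omega
    obtain ⟨k, hk⟩ : ∃ k : Fin 3, ∀ f ∈ S, ∀ v, v ∈ e → v ∈ f → c f ≠ k := by
      induction e using Sym2.ind with
      | _ a b =>
        have ha := hone a (by simp)
        have hb := hone b (by simp)
        let T := (S.filter (fun f => a ∈ f) ∪ S.filter (fun f => b ∈ f)).image c
        have hT : T.card < (univ : Finset (Fin 3)).card := by
          have h1 : T.card ≤ _ := card_image_le
          have h2 := card_union_le (S.filter (fun f => a ∈ f)) (S.filter (fun f => b ∈ f))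
          simp only [Finset.card_univ, Fintype.card_fin]
          omega
        obtain ⟨k, -, hk⟩ := Finset.exists_mem_notMem_of_card_lt_card hT
        refine ⟨k, fun f hf v hv hvf hck => hk ?_⟩
        rw [Finset.mem_image]
        refine ⟨f, ?_, hck⟩
        rw [Sym2.mem_iff] at hv
        rcases hv with rfl | rfl <;> simp [hf, hvf]
    refine ⟨fun f => if f = e then k else c f, ?_⟩
    intro f hf g hg v hvf hvg hne
    rw [Finset.mem_insert] at hf hg
    by_cases hfe : f = e
    · subst hfe
      have hgS : g ∈ S := hg.resolve_left (Ne.symm hne)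
      simp only [if_true, if_neg (Ne.symm hne)]
      exact (hk g hgS v hvf hvg).symm
    · have hfS := hf.resolve_left hfe
      by_cases hge : g = e
      · subst hge
        simp only [if_true, if_neg hfe]
        exact hk f hfS v hvg hvf
      · simp only [if_neg hfe, if_neg hge]
        exact hc f hfS g (hg.resolve_left hge) v hvf hvg hne

theorem aux_deg [Fintype V] [DecidableEq V] (G : SimpleGraph V) (γ : Sym2 V → ℝ)
    (h : IsBasicFEC G γ) (v : V) :
    ((G.edgeFinset.filter (fun e => γ e = 1 / 2)).filter (fun e => v ∈ e)).card ≤ 2 := by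
  obtain ⟨-, -, hcomp, hhalf⟩ := h
  set H := suppGraph G γ with hH
  let N : Set V := {x | G.Adj v x ∧ γ s(v, x) = 1 / 2}
  have hNH : ∀ x ∈ N, H.Adj v x := fun x hx => ⟨hx.1, by rw [hx.2]; norm_num⟩
  have hle : ((G.edgeFinset.filter (fun e => γ e = 1 / 2)).filter (fun e => v ∈ e)).card
      ≤ N.ncard := by
    rw [Set.ncard_eq_toFinset_card' N]
    refine le_trans (card_le_card ?_) (card_image_le (s := N.toFinset) (f := fun x => s(v, x)))
    intro e he
    simp only [Finset.mem_filter, SimpleGraph.mem_edgeFinset] at he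
    obtain ⟨⟨he, hg⟩, hv⟩ := he
    obtain ⟨x, rfl⟩ := hv
    simp only [Finset.mem_image, Set.mem_toFinset]
    exact ⟨x, ⟨he, hg⟩, rfl⟩
  refine hle.trans ?_
  rcases N.eq_empty_or_nonempty with hN | ⟨x, hx⟩
  · simp [hN]
  have hvx := hNH x hx
  rcases hcomp v x hvx with ⟨c, hc⟩ | ⟨w, c, hcyc, -, -, hc⟩
  · exfalso
    obtain ⟨w, d, hd, -, hed⟩ := (hhalf s(v, x) hx.1).1 hx.2
    have hr : ∀ y, y = v ∨ y = x → H.Reachable v y := by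
      rintro y (rfl | rfl)
      · exact SimpleGraph.Reachable.refl _
      · exact hvx.reachable
    -- an endpoint different from the center
    have key : ∀ y, (y = v ∨ y = x) → y ≠ c → False := by
      intro y hy hyc
      have hys : y ∈ d.support := by
        rcases hy with rfl | rfl
        · exact d.fst_mem_support_of_mem_edges hed
        · exact d.snd_mem_support_of_mem_edges hed
      have h2 := hd.ncard_neighborSet_toSubgraph_eq_two hys
      have hsub : d.toSubgraph.neighborSet y ⊆ {c} := by
        intro z hz
        exact (hc y z (d.toSubgraph.adj_sub hz) (hr y hy)).resolve_left hyc
      have := Set.ncard_le_ncard hsub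
      rw [h2, Set.ncard_singleton] at this
      omega
    by_cases hvc : v = c
    · exact key x (Or.inr rfl) (fun hxc => hvx.ne (hvc.trans hxc.symm))
    · exact key v (Or.inl rfl) hvc
  · have hvs : v ∈ c.support :=
      c.fst_mem_support_of_mem_edges (hc v x hvx (SimpleGraph.Reachable.refl _))
    rw [← hcyc.ncard_neighborSet_toSubgraph_eq_two hvs]
    refine Set.ncard_le_ncard ?_ (Set.toFinite _)
    intro y hy
    have := hc v y (hNH y hy) (SimpleGraph.Reachable.refl _)
    rw [SimpleGraph.Subgraph.mem_neighborSet, ← SimpleGraph.Subgraph.mem_edgeSet,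
      SimpleGraph.Walk.mem_edges_toSubgraph]
    exact this

/-- If `ρ` is admissible for the family of edge covers, then `(4/3)ρ` is admissible for
the family of basic fractional edge covers. -/
theorem scaled_adm_bfec [Fintype V] [DecidableEq V] (G : SimpleGraph V)
    (hiso : ∀ v : V, ∃ u, G.Adj v u) (ρ : Sym2 V → ℝ) (hρ : ρ ∈ Adm G (Γec G)) :
    (fun e => (4 / 3 : ℝ) * ρ e) ∈ Adm G (Γbfec G) := by
  obtain ⟨h0, hs, hadm⟩ := hρ
  refine ⟨fun e => mul_nonneg (by norm_num) (h0 e), fun e he => by simp [hs e he], ?_⟩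
  intro γ hγ
  obtain ⟨c, hc⟩ := aux_color _ (aux_deg G γ hγ)
  obtain ⟨⟨-, -, hcov⟩, hval, -, -⟩ := hγ
  let C : Fin 3 → Finset (Sym2 V) := fun i =>
    G.edgeFinset.filter (fun e => γ e = 1 ∨ (γ e = 1 / 2 ∧ c e ≠ i))
  have hC : ∀ i, IsEdgeCover G (C i) := by
    intro i
    refine ⟨?_, ?_⟩
    · intro e he
      simp only [C, Finset.coe_filter, Set.mem_setOf_eq, SimpleGraph.mem_edgeFinset] at he
      exact he.1
    · intro v
      by_contra hno
      push Not at hno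
      have hinc : ∀ e ∈ G.incidenceFinset v, e ∈ G.edgeFinset ∧ v ∈ e := by
        intro e he
        rw [SimpleGraph.mem_incidenceFinset] at he
        exact ⟨SimpleGraph.mem_edgeFinset.2 he.1, he.2⟩
      have hv : ∀ e ∈ G.incidenceFinset v, γ e = 0 ∨ (γ e = 1 / 2 ∧ c e = i) := by
        intro e he
        obtain ⟨he1, he2⟩ := hinc e he
        rcases hval e with h | h | h
        · exact Or.inl h
        · refine Or.inr ⟨h, ?_⟩
          by_contra hci
          exact hno e (by simp only [C, Finset.mem_filter]; exact ⟨he1, Or.inr ⟨h, hci⟩⟩) he2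
        · exact absurd he2 (hno e (by simp only [C, Finset.mem_filter]; exact ⟨he1, Or.inl h⟩))
      have hsum : ∑ e ∈ G.incidenceFinset v, γ e ≤ 1 / 2 := by
        by_cases hex : ∃ e ∈ G.incidenceFinset v, γ e = 1 / 2
        · obtain ⟨e, he, hee⟩ := hex
          rw [Finset.sum_eq_single_of_mem e he, hee]
          intro f hf hfe
          rcases hv f hf with h | ⟨h, hci⟩
          · exact h
          · exfalso
            have hei : c e = i := by
              rcases hv e he with h' | h'
              · rw [h'] at hee; norm_num at hee
              · exact h'.2
            exact hc f (Finset.mem_filter.2 ⟨(hinc f hf).1, h⟩) e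
              (Finset.mem_filter.2 ⟨(hinc e he).1, hee⟩) v (hinc f hf).2 (hinc e he).2 hfe
              (hci.trans hei.symm)
        · push Not at hex
          rw [Finset.sum_eq_zero]
          · norm_num
          · intro e he
            rcases hv e he with h | h
            · exact h
            · exact absurd h.1 (hex e he)
      linarith [hcov v]
  have hA : ∀ i, 1 ≤ ∑ e ∈ G.edgeFinset, (if e ∈ C i then (1 : ℝ) else 0) * ρ e :=
    fun i => hadm _ ⟨C i, hC i, rfl⟩
  have hpt : ∑ i : Fin 3, ∑ e ∈ G.edgeFinset, (if e ∈ C i then (1 : ℝ) else 0) * ρ e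
      ≤ ∑ e ∈ G.edgeFinset, 4 * (γ e * ρ e) := by
    rw [Finset.sum_comm]
    refine Finset.sum_le_sum fun e he => ?_
    rw [← Finset.sum_mul, ← mul_assoc]
    refine mul_le_mul_of_nonneg_right ?_ (h0 e)
    rcases hval e with h | h | h
    · simp [C, h]
    · have : ∀ k : Fin 3, (∑ i : Fin 3, if k = i then (0 : ℝ) else 1) = 2 := by
        intro k; fin_cases k <;> simp [Fin.sum_univ_three] <;> norm_num
      have h2 := this (c e)
      simp only [C, Finset.mem_filter, he, true_and, h]
      norm_num
      norm_num at h2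
      linarith
    · simp only [C, Finset.mem_filter, he, true_and, h]
      norm_num
  have h3 : (3 : ℝ) ≤ ∑ i : Fin 3, ∑ e ∈ G.edgeFinset, (if e ∈ C i then (1 : ℝ) else 0) * ρ e := by
    rw [Fin.sum_univ_three]
    linarith [hA 0, hA 1, hA 2]
  have : ∑ e ∈ G.edgeFinset, γ e * (4 / 3 * ρ e)
      = (∑ e ∈ G.edgeFinset, 4 * (γ e * ρ e)) / 3 := by
    rw [Finset.sum_div]
    exact Finset.sum_congr rfl fun e _ => by ring
  show 1 ≤ ∑ e ∈ G.edgeFinset, γ e * (4 / 3 * ρ e)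
  rw [this]
  linarith
end
end
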